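/- arXiv:1911.10464 — 9 statements merged into one kernel-verified Lean document; each statement's English description precedes it below -/
import Mathlib

section
/- Let G be a graph containing distinct vertices u, v, w, t1, t2, t3, t4, t5 such that uv, vw, ut1, ut2, ut3, wt1, wt4, wt5, vt3, vt4 are edges of G. If the graph G − {u, v, w} + {t1t3, t1t4} contains a subdivision of K5, then G contains a subdivision of K5. -/
/-!
The two added edges `t1t3` and `t1t4` can be replaced by the paths `t1 - u - t3` and
`t1 - w - t4` of `G`. Since `u` and `w` are distinct and isolated in `G - {u, v, w} + {t1t3, t1t4}`,
no branch vertex or path of a `K5`-subdivision of that graph meets them, so after the replacement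
the result is still a `K5`-subdivision, now contained in `G`.

`hasK5Subdivision_of_subdivide_edge` performs one such replacement: an edge `ab` of `K` is rerouted
through a vertex `c` isolated in `K`. It is applied twice, first to `t1t3` with `c = u`, then to
`t1t4` with `c = w`. Disjointness is preserved because at most one of the ten paths
uses the edge `ab`: two of them can share both `a` and `b` only if `a` and `b` are the ends of both.
-/


open SimpleGraph

/-- The internal vertices of a walk: its support with the two endpoints removed. -/
def walkInterior {V : Type} {G : SimpleGraph V} {u v : V} (p : G.Walk u v) : List V :=
  p.support.tail.dropLast

/-- `G` contains a subdivision of `K5`: five branch vertices joined by pairwise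
internally disjoint paths whose interiors avoid all branch vertices. -/
def HasK5Subdivision {V : Type} (G : SimpleGraph V) : Prop :=
  ∃ b : Fin 5 → V, Function.Injective b ∧
    ∃ P : ∀ i j : Fin 5, G.Walk (b i) (b j),
      (∀ i j : Fin 5, i < j → (P i j).IsPath) ∧
      (∀ i j : Fin 5, i < j → ∀ k : Fin 5, b k ∉ walkInterior (P i j)) ∧
      (∀ i j i' j' : Fin 5, i < j → i' < j' → (i, j) ≠ (i', j') →
        ∀ x ∈ walkInterior (P i j), x ∉ (P i' j').support)

/-- `G` contains a subdivision of `K3,3`. -/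
def HasK33Subdivision {V : Type} (G : SimpleGraph V) : Prop :=
  ∃ a b : Fin 3 → V, Function.Injective a ∧ Function.Injective b ∧
    (∀ i j : Fin 3, a i ≠ b j) ∧
    ∃ P : ∀ i j : Fin 3, G.Walk (a i) (b j),
      (∀ i j : Fin 3, (P i j).IsPath) ∧
      (∀ i j k : Fin 3, a k ∉ walkInterior (P i j) ∧ b k ∉ walkInterior (P i j)) ∧
      (∀ i j i' j' : Fin 3, (i, j) ≠ (i', j') →
        ∀ x ∈ walkInterior (P i j), x ∉ (P i' j').support)

/-- A finite graph is planar iff it contains no subdivision of `K5` or of `K3,3`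
(Kuratowski's theorem). -/
def IsPlanar {V : Type} (G : SimpleGraph V) : Prop :=
  ¬ HasK5Subdivision G ∧ ¬ HasK33Subdivision G

/-- The graph obtained from `G` by adding a new apex vertex joined to all vertices of `S`. -/
def apexGraph {V : Type} (G : SimpleGraph V) (S : Set V) : SimpleGraph (Option V) :=
  SimpleGraph.fromRel (fun x y =>
    (∃ a b : V, x = some a ∧ y = some b ∧ G.Adj a b) ∨
    (x = none ∧ ∃ a ∈ S, y = some a))

/-- `(G, S)` is planar: `G` can be drawn in a closed disc with no edge crossings and with
`S` on the boundary of the disc.  Equivalently, the graph obtained by adding an apex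
vertex adjacent to all of `S` is planar. -/
def PairPlanar {V : Type} (G : SimpleGraph V) (S : Set V) : Prop :=
  IsPlanar (apexGraph G S)

/-- `(H, S)` is planar, for a subgraph `H` of an ambient graph. -/
def SubgraphPairPlanar {V : Type} {G : SimpleGraph V} (H : G.Subgraph) (S : Set V) : Prop :=
  PairPlanar H.coe {x : H.verts | (x : V) ∈ S}

/-- A Hajós graph: no `K5`-subdivision, not 4-colorable, and vertex-minimum with these
two properties (every graph on fewer vertices has a `K5`-subdivision or is 4-colorable). -/
def IsHajos {V : Type} [Fintype V] (G : SimpleGraph V) : Prop :=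
  ¬ HasK5Subdivision G ∧ ¬ G.Colorable 4 ∧
    ∀ n : ℕ, n < Fintype.card V → ∀ H : SimpleGraph (Fin n),
      HasK5Subdivision H ∨ H.Colorable 4

/-- `(G1, G2)` is a `k`-separation of `G`: edge-disjoint subgraphs with union `G`,
`|V(G1) ∩ V(G2)| = k`, and each side carries an edge or a private vertex. -/
def IsSeparation {V : Type} {G : SimpleGraph V} (G1 G2 : G.Subgraph) (k : ℕ) : Prop :=
  G1 ⊔ G2 = ⊤ ∧ Disjoint G1.edgeSet G2.edgeSet ∧
  (G1.verts ∩ G2.verts).ncard = k ∧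
  (G1.edgeSet.Nonempty ∨ (G1.verts \ G2.verts).Nonempty) ∧
  (G2.edgeSet.Nonempty ∨ (G2.verts \ G1.verts).Nonempty)

/-- `W` is a wheel with center `w`: it consists of a cycle `C` avoiding `w`, together with
at least three edges (spokes) from `w` to `C`. -/
def IsWheelSubgraph {V : Type} {G : SimpleGraph V} (W : G.Subgraph) (w : V) : Prop :=
  ∃ (u : V) (C : G.Walk u u) (T : Set V), C.IsCycle ∧ w ∉ C.support ∧
    T ⊆ {x | x ∈ C.support} ∧ 3 ≤ T.ncard ∧
    W.verts = insert w {x | x ∈ C.support} ∧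
    W.edgeSet = {e | e ∈ C.edges} ∪ (fun x => s(w, x)) '' T

/-- The subgraph `H` contains an `S`-good wheel: a wheel `W ≤ H` with center `w ∉ S` such
that every vertex of `S ∩ V(W)` is a neighbor of `w` in `H`. -/
def HasGoodWheel {V : Type} {G : SimpleGraph V} (H : G.Subgraph) (S : Set V) : Prop :=
  ∃ (W : G.Subgraph) (w : V), W ≤ H ∧ IsWheelSubgraph W w ∧ w ∉ S ∧
    ∀ s ∈ S, s ∈ W.verts → H.Adj w s

/-- `G` is `k`-connected: more than `k` vertices, and deleting fewer than `k` vertices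
leaves a connected graph. -/
def IsKConnected {V : Type} [Fintype V] (G : SimpleGraph V) (k : ℕ) : Prop :=
  k < Fintype.card V ∧ ∀ X : Set V, X.ncard < k → (G.induce (Xᶜ : Set V)).Connected

/- The six obstruction graphs, with `S = {t1,...,t5} = {0,1,2,3,4}` and the remaining
vertices `u, v, w, z` labelled `5, 6, 7, 8`. -/

def Obs1 : SimpleGraph (Fin 6) :=
  SimpleGraph.fromEdgeSet {s(5,0), s(5,1), s(5,2), s(5,3)}

def Obs2 : SimpleGraph (Fin 6) :=
  SimpleGraph.fromEdgeSet {s(5,0), s(5,1), s(5,2), s(5,3), s(5,4)}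

def Obs3 : SimpleGraph (Fin 7) :=
  SimpleGraph.fromEdgeSet {s(5,6), s(5,0), s(5,1), s(5,2), s(6,0), s(6,2), s(6,3), s(6,4)}

def Obs4 : SimpleGraph (Fin 7) :=
  SimpleGraph.fromEdgeSet {s(5,6), s(5,0), s(5,1), s(5,2), s(6,2), s(6,3), s(6,4)}

def Obs5 : SimpleGraph (Fin 8) :=
  SimpleGraph.fromEdgeSet {s(5,6), s(5,0), s(5,1), s(5,2), s(6,7), s(6,0), s(6,2), s(6,3),
    s(7,0), s(7,3), s(7,4)}

def Obs6 : SimpleGraph (Fin 9) :=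
  SimpleGraph.fromEdgeSet {s(8,5), s(8,6), s(8,7), s(8,0), s(8,1), s(8,4), s(5,6), s(5,1),
    s(5,2), s(6,7), s(6,2), s(6,3), s(7,3), s(7,4)}

/-- The subgraph `G1` (with distinguished set `S`) is isomorphic to the graph `O` on
`Fin n` by an isomorphism carrying `S` exactly onto `SO`. -/
def IsoCarrying {V : Type} {G : SimpleGraph V} (G1 : G.Subgraph) (S : Set V)
    {n : ℕ} (O : SimpleGraph (Fin n)) (SO : Set (Fin n)) : Prop :=
  ∃ f : G1.coe ≃g O, ∀ x : G1.verts, ((x : V) ∈ S ↔ f x ∈ SO)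

/-- `(G1, S)` is one of the six obstruction graphs of Figure 1. -/
def IsObstruction {V : Type} {G : SimpleGraph V} (G1 : G.Subgraph) (S : Set V) : Prop :=
  IsoCarrying G1 S Obs1 {0,1,2,3,4} ∨ IsoCarrying G1 S Obs2 {0,1,2,3,4} ∨
  IsoCarrying G1 S Obs3 {0,1,2,3,4} ∨ IsoCarrying G1 S Obs4 {0,1,2,3,4} ∨
  IsoCarrying G1 S Obs5 {0,1,2,3,4} ∨ IsoCarrying G1 S Obs6 {0,1,2,3,4}

/-- `G − X + T`: delete the vertices of `X` (with all incident edges) and add the pairs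
in `T` as edges. -/
def deleteAdd {V : Type} (G : SimpleGraph V) (X : Set V) (T : Set (V × V)) : SimpleGraph V :=
  SimpleGraph.fromRel (fun a b => (G.Adj a b ∧ a ∉ X ∧ b ∉ X) ∨ (a, b) ∈ T)

lemma mem_walkInterior_iff {V : Type} {G : SimpleGraph V} {x y : V} (p : G.Walk x y)
    (hp : p.IsPath) (z : V) :
    z ∈ walkInterior p ↔ z ∈ p.support ∧ z ≠ x ∧ z ≠ y := by
  cases p with
  | nil => simp [walkInterior]
  | cons h p =>
    rw [Walk.cons_isPath_iff] at hp
    obtain ⟨hp, hx⟩ := hp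
    have h1 : p.support.dropLast ++ [y] = p.support := by
      have := List.dropLast_append_getLast p.support_ne_nil
      rwa [Walk.getLast_support] at this
    have h2 := hp.support_nodup
    simp only [walkInterior, Walk.support_cons, List.tail_cons, List.mem_cons]
    rw [← h1] at h2 hx
    rw [← h1, List.dropLast_concat]
    simp only [List.nodup_append, List.mem_append, List.mem_singleton] at *
    grind

lemma isolated_notMem_support {V : Type} {K : SimpleGraph V} {c : V} (hc : ∀ z, ¬ K.Adj c z)
    {x y : V} (p : K.Walk x y) (hx : x ≠ c) : c ∉ p.support := by
  induction p with
  | nil => simpa using hx.symm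
  | cons h p ih =>
    rw [Walk.support_cons, List.mem_cons, not_or]
    exact ⟨hx.symm, ih (fun e => hc _ (e ▸ h.symm))⟩

/-- A walk of `K` avoiding `c` is turned into a walk of `G` by rerouting the edge `ab` through `c`;
paths remain paths. -/
lemma exists_rerouted_walk {V : Type} {K G : SimpleGraph V} {a b c : V}
    (hca : G.Adj c a) (hcb : G.Adj c b)
    (hKG : ∀ x y, K.Adj x y → s(x, y) ≠ s(a, b) → G.Adj x y)
    {x y : V} (p : K.Walk x y) (hp : c ∉ p.support) :
    ∃ q : G.Walk x y, (p.IsPath → q.IsPath) ∧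
      ∀ z ∈ q.support, z ∈ p.support ∨ (z = c ∧ s(a, b) ∈ p.edges) := by
  induction p with
  | nil => exact ⟨Walk.nil, by simp, by simp⟩
  | @cons x m y h p ih =>
    rw [Walk.support_cons, List.mem_cons, not_or] at hp
    obtain ⟨q, hq, hs⟩ := ih hp.2
    by_cases he : s(x, m) = s(a, b)
    · have hxc : G.Adj x c ∧ G.Adj c m := by
        rcases Sym2.eq_iff.1 he with ⟨rfl, rfl⟩ | ⟨rfl, rfl⟩
        · exact ⟨hca.symm, hcb⟩
        · exact ⟨hcb.symm, hca⟩
      refine ⟨Walk.cons hxc.1 (Walk.cons hxc.2 q), fun hpath => ?_, fun z hz => ?_⟩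
      · rw [Walk.cons_isPath_iff] at hpath
        -- a path starting with the edge `ab` does not use it again, so `c` is inserted only once
        have hne : s(a, b) ∉ p.edges := fun hmem =>
          hpath.2 (p.fst_mem_support_of_mem_edges (he ▸ hmem))
        rw [Walk.cons_isPath_iff, Walk.cons_isPath_iff, Walk.support_cons, List.mem_cons]
        exact ⟨⟨hq hpath.1, fun h => by grind⟩, by grind⟩
      · simp only [Walk.support_cons, Walk.edges_cons, List.mem_cons] at hz ⊢
        grind
    · refine ⟨Walk.cons (hKG _ _ h he) q, fun hpath => ?_, fun z hz => ?_⟩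
      · rw [Walk.cons_isPath_iff] at hpath ⊢
        exact ⟨hq hpath.1, by grind⟩
      · simp only [Walk.support_cons, Walk.edges_cons, List.mem_cons] at hz ⊢
        grind

/-- If `c` is isolated in `K`, and `G` contains `K - ab` together with the path `a - c - b`, then a
`K5`-subdivision in `K` yields one in `G`. -/
lemma hasK5Subdivision_of_subdivide_edge {V : Type} {K G : SimpleGraph V} {a b c : V}
    (hc : ∀ z, ¬ K.Adj c z) (hca : G.Adj c a) (hcb : G.Adj c b)
    (hKG : ∀ x y, K.Adj x y → s(x, y) ≠ s(a, b) → G.Adj x y)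
    (hK : HasK5Subdivision K) : HasK5Subdivision G := by
  obtain ⟨f, hf, P, hpath, hbranch, hdisj⟩ := hK
  have hfc : ∀ k, f k ≠ c := by
    intro k hk
    obtain ⟨k', hk'⟩ := exists_ne k
    refine isolated_notMem_support hc (P k' k) (fun e => hk' (hf (e.trans hk.symm))) ?_
    exact hk ▸ (P k' k).end_mem_support
  have hcP : ∀ i j, c ∉ (P i j).support := fun i j => isolated_notMem_support hc _ (hfc i)
  choose Q hQpath hQsupp using fun i j => exists_rerouted_walk hca hcb hKG (P i j) (hcP i j)
  -- a vertex shared by two of the paths is an end of each of them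
  have hends : ∀ i j i' j' : Fin 5, i < j → i' < j' → (i, j) ≠ (i', j') →
      ∀ z ∈ (P i j).support, z ∈ (P i' j').support → z = f i ∨ z = f j := by
    intro i j i' j' hij hij' hne z hz hz'
    by_contra! hcon
    exact hdisj i j i' j' hij hij' hne z
      ((mem_walkInterior_iff _ (hpath i j hij) z).2 ⟨hz, hcon⟩) hz'
  refine ⟨f, hf, Q, fun i j hij => hQpath i j (hpath i j hij), ?_, ?_⟩
  · intro i j hij k hk
    obtain ⟨hk, hne⟩ := (mem_walkInterior_iff _ (hQpath i j (hpath i j hij)) _).1 hk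
    rcases hQsupp i j _ hk with h | h
    · exact hbranch i j hij k ((mem_walkInterior_iff _ (hpath i j hij) _).2 ⟨h, hne⟩)
    · exact hfc k h.1
  · intro i j i' j' hij hij' hne z hz hz'
    obtain ⟨hz, hzne⟩ := (mem_walkInterior_iff _ (hQpath i j (hpath i j hij)) _).1 hz
    rcases hQsupp i j z hz with h | ⟨rfl, h⟩
    · rcases hQsupp i' j' z hz' with h' | ⟨rfl, h'⟩
      · exact (hends i j i' j' hij hij' hne z h h').elim hzne.1 hzne.2
      · exact hcP i j h
    · rcases hQsupp i' j' z hz' with h' | ⟨-, h'⟩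
      · exact hcP i' j' h'
      · have hab : a ≠ b := (Walk.adj_of_mem_edges _ h).ne
        have ha := Walk.fst_mem_support_of_mem_edges _ h
        have hb := Walk.snd_mem_support_of_mem_edges _ h
        have ha' := Walk.fst_mem_support_of_mem_edges _ h'
        have hb' := Walk.snd_mem_support_of_mem_edges _ h'
        have e1 := hends i j i' j' hij hij' hne a ha ha'
        have e2 := hends i j i' j' hij hij' hne b hb hb'
        have e3 := hends i' j' i j hij' hij hne.symm a ha' ha
        have e4 := hends i' j' i j hij' hij hne.symm b hb' hb
        -- both `{f i, f j}` and `{f i', f j'}` equal `{a, b}`, so the index pairs agree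
        have key : (i = i' ∧ j = j') ∨ (i = j' ∧ j = i') := by
          rcases e1 with e1 | e1 <;> rcases e2 with e2 | e2 <;> rcases e3 with e3 | e3 <;>
            rcases e4 with e4 | e4 <;>
            first
            | exact absurd (e1.trans e2.symm) hab
            | exact absurd (e3.trans e4.symm) hab
            | exact Or.inl ⟨hf (e1.symm.trans e3), hf (e2.symm.trans e4)⟩
            | exact Or.inl ⟨hf (e2.symm.trans e4), hf (e1.symm.trans e3)⟩
            | exact Or.inr ⟨hf (e1.symm.trans e3), hf (e2.symm.trans e4)⟩
            | exact Or.inr ⟨hf (e2.symm.trans e4), hf (e1.symm.trans e3)⟩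
        rcases key with ⟨rfl, rfl⟩ | ⟨rfl, rfl⟩
        · exact hne rfl
        · exact absurd hij hij'.not_gt

/-- If `uv, vw, ut1, ut2, ut3, wt1, wt4, wt5, vt3, vt4` are edges of `G`
and `G − {u, v, w} + {t1t3, t1t4}` contains a subdivision of `K5`, then so does `G`. -/
theorem statement11 {V : Type} (G : SimpleGraph V) (u v w t1 t2 t3 t4 t5 : V)
    (hdist : List.Pairwise (· ≠ ·) [u, v, w, t1, t2, t3, t4, t5])
    (huv : G.Adj u v) (hvw : G.Adj v w)
    (hut1 : G.Adj u t1) (hut2 : G.Adj u t2) (hut3 : G.Adj u t3)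
    (hwt1 : G.Adj w t1) (hwt4 : G.Adj w t4) (hwt5 : G.Adj w t5)
    (hvt3 : G.Adj v t3) (hvt4 : G.Adj v t4)
    (hsub : HasK5Subdivision (deleteAdd G {u, v, w} {(t1, t3), (t1, t4)})) :
    HasK5Subdivision G := by
  simp only [List.pairwise_cons, List.mem_cons, forall_eq_or_imp, List.not_mem_nil,
    IsEmpty.forall_iff, implies_true, and_true] at hdist
  -- the intermediate graph, in which only `t1t3` has been rerouted
  let G1 : SimpleGraph V := SimpleGraph.fromRel (fun x y =>
    ((deleteAdd G {u, v, w} {(t1, t3), (t1, t4)}).Adj x y ∧ s(x, y) ≠ s(t1, t3)) ∨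
      (x = u ∧ (y = t1 ∨ y = t3)))
  have hG1 : HasK5Subdivision G1 := by
    refine hasK5Subdivision_of_subdivide_edge (a := t1) (b := t3) (c := u) ?_ ?_ ?_ ?_ hsub
    · intro z
      simp only [deleteAdd, SimpleGraph.fromRel_adj, Set.mem_insert_iff, Set.mem_singleton_iff,
        Prod.mk.injEq]
      grind
    · simp only [G1, SimpleGraph.fromRel_adj]; grind
    · simp only [G1, SimpleGraph.fromRel_adj]; grind
    · intro x y h hne
      simp only [G1, SimpleGraph.fromRel_adj]
      exact ⟨h.ne, Or.inl (Or.inl ⟨h, hne⟩)⟩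
  refine hasK5Subdivision_of_subdivide_edge (a := t1) (b := t4) (c := w) ?_ hwt1 hwt4 ?_ hG1
  · intro z
    simp only [G1, deleteAdd, SimpleGraph.fromRel_adj, Set.mem_insert_iff, Set.mem_singleton_iff,
      Prod.mk.injEq]
    grind
  · intro x y h hne
    simp only [G1, deleteAdd, SimpleGraph.fromRel_adj, Set.mem_insert_iff, Set.mem_singleton_iff,
      Prod.mk.injEq, ne_eq, Sym2.eq_iff] at h hne
    grind [SimpleGraph.adj_comm]
end

section
/- Let G be a graph containing distinct vertices u, v, w, t1, t2, t3, t4, t5 such that N_G(u) = {t1, t2, t3, v}, N_G(w) = {t1, t4, t5, v}, and N_G(v) = {u, w, t3, t4}. If the graph G − {u, v, w} + {t1t3, t1t4} is 4-colorable, then G is 4-colorable. -/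
/-!
Let `c` be a 4-coloring of `G − {u, v, w} + {t1t3, t1t4}`. The added edges give
`c t1 ≠ c t3` and `c t1 ≠ c t4`, so `v` may receive the color `c t1`. Then `u` sees only the
colors of `t1, t2, t3` and `w` only those of `t1, t4, t5`, so each has a fourth color available,
and `u`, `w` are not adjacent.
-/

open SimpleGraph

/-- If `N_G(u) = {t1, t2, t3, v}`, `N_G(w) = {t1, t4, t5, v}`,
`N_G(v) = {u, w, t3, t4}`, and `G − {u, v, w} + {t1t3, t1t4}` is 4-colorable, then `G`
is 4-colorable. -/
theorem statement12 {V : Type} (G : SimpleGraph V) (u v w t1 t2 t3 t4 t5 : V)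
    (hdist : List.Pairwise (· ≠ ·) [u, v, w, t1, t2, t3, t4, t5])
    (hu : G.neighborSet u = {t1, t2, t3, v})
    (hw : G.neighborSet w = {t1, t4, t5, v})
    (hv : G.neighborSet v = {u, w, t3, t4})
    (hcol : (deleteAdd G {u, v, w} {(t1, t3), (t1, t4)}).Colorable 4) :
    G.Colorable 4 := by
  obtain ⟨c⟩ := hcol
  have hne {a b : V} (h : (deleteAdd G {u, v, w} {(t1, t3), (t1, t4)}).Adj a b) :
      c a ≠ c b := c.valid h
  have hfour : ∀ x y z : Fin 4, ∃ d : Fin 4, d ≠ x ∧ d ≠ y ∧ d ≠ z := by decide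
  obtain ⟨du, hdu1, hdu2, hdu3⟩ := hfour (c t1) (c t2) (c t3)
  obtain ⟨dw, hdw1, hdw4, hdw5⟩ := hfour (c t1) (c t4) (c t5)
  simp only [List.pairwise_cons, List.mem_cons, List.not_mem_nil, or_false, forall_eq_or_imp,
    forall_eq] at hdist
  have h13 : c t1 ≠ c t3 := hne (by simp [deleteAdd, fromRel_adj]; grind)
  have h14 : c t1 ≠ c t4 := hne (by simp [deleteAdd, fromRel_adj]; grind)
  have hrest : ∀ a b, G.Adj a b → a ≠ u → a ≠ v → a ≠ w → b ≠ u → b ≠ v → b ≠ w →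
      c a ≠ c b := by
    intro a b hab _ _ _ _ _ _
    have := hab.ne
    exact hne (by simp [deleteAdd, fromRel_adj]; grind)
  have hu' : ∀ b, G.Adj u b ↔ b = t1 ∨ b = t2 ∨ b = t3 ∨ b = v := fun b => by
    rw [← mem_neighborSet, hu]; simp
  have hw' : ∀ b, G.Adj w b ↔ b = t1 ∨ b = t4 ∨ b = t5 ∨ b = v := fun b => by
    rw [← mem_neighborSet, hw]; simp
  have hv' : ∀ b, G.Adj v b ↔ b = u ∨ b = w ∨ b = t3 ∨ b = t4 := fun b => by
    rw [← mem_neighborSet, hv]; simp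
  classical
  refine ⟨Coloring.mk
    (fun x => if x = u then du else if x = w then dw else if x = v then c t1 else c x) ?_⟩
  intro a b hab
  have hba := hab.symm
  have hr := hrest a b hab
  by_cases hau : a = u
  · subst hau
    grind
  by_cases haw : a = w
  · subst haw
    grind
  by_cases hav : a = v
  · subst hav
    grind
  by_cases hbu : b = u
  · subst hbu
    grind
  by_cases hbw : b = w
  · subst hbw
    grind
  by_cases hbv : b = v
  · subst hbv
    grind
  grind
end

section
/- Let G be a graph containing distinct vertices u1, u2, u3, u4, t1, t2, t3, t4 such that N_G(u1) = {u4, u2, t1, t2}, N_G(u2) = {u1, u3, t2, t3}, N_G(u3) = {u2, u4, t3, t4}, and N_G(u4) = {u3, u1, t4, t1}. If G − {u1, u2, u3, u4} is 4-colorable, then G is 4-colorable. -/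
/-!
The four vertices `u1, u2, u3, u4` induce a 4-cycle, and each `ui` has exactly two neighbors
outside it. Given a 4-coloring of `G - {u1, u2, u3, u4}`, each `ui` therefore keeps a list of at
least two admissible colors. An even cycle is 2-choosable, so the cycle can be colored from these
lists, which extends the coloring to `G`. The list coloring of the 4-cycle is
`exists_extension_four_cycle`, a finite check over the colors of `t1, t2, t3, t4`.
-/

open SimpleGraph

set_option synthInstance.maxHeartbeats 400000 in
set_option synthInstance.maxSize 4096 in
/-- If `t1, t2, t3, t4` have colors `a, b, c, d`, then the 4-cycle `u1 u2 u3 u4` has a proper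
coloring `p, q, r, s` in which every `ui` avoids the colors of its two outer neighbors. -/
lemma exists_extension_four_cycle : ∀ a b c d : Fin 4, ∃ p q r s : Fin 4,
    (p ≠ q ∧ q ≠ r ∧ r ≠ s ∧ s ≠ p) ∧
    (p ≠ a ∧ p ≠ b) ∧ (q ≠ b ∧ q ≠ c) ∧ (r ≠ c ∧ r ≠ d) ∧ (s ≠ d ∧ s ≠ a) := by
  decide +kernel

/-- If `N_G(u1) = {u4, u2, t1, t2}`, `N_G(u2) = {u1, u3, t2, t3}`,
`N_G(u3) = {u2, u4, t3, t4}`, `N_G(u4) = {u3, u1, t4, t1}`, and `G − {u1, u2, u3, u4}`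
is 4-colorable, then `G` is 4-colorable. -/
theorem statement13 {V : Type} (G : SimpleGraph V) (u1 u2 u3 u4 t1 t2 t3 t4 : V)
    (hdist : List.Pairwise (· ≠ ·) [u1, u2, u3, u4, t1, t2, t3, t4])
    (h1 : G.neighborSet u1 = {u4, u2, t1, t2})
    (h2 : G.neighborSet u2 = {u1, u3, t2, t3})
    (h3 : G.neighborSet u3 = {u2, u4, t3, t4})
    (h4 : G.neighborSet u4 = {u3, u1, t4, t1})
    (hcol : (deleteAdd G {u1, u2, u3, u4} ∅).Colorable 4) :
    G.Colorable 4 := by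
  classical
  obtain ⟨f⟩ := hcol
  -- The old coloring is proper on edges of `G` that avoid the 4-cycle.
  have hf : ∀ x y, G.Adj x y → x ∉ ({u1, u2, u3, u4} : Set V) →
      y ∉ ({u1, u2, u3, u4} : Set V) → f x ≠ f y := by
    intro x y hxy hx hy
    apply f.valid
    rw [deleteAdd, SimpleGraph.fromRel_adj]
    exact ⟨hxy.ne, Or.inl (Or.inl ⟨hxy, hx, hy⟩)⟩
  obtain ⟨p, q, r, s, hcyc, hp, hq, hr, hs⟩ :=
    exists_extension_four_cycle (f t1) (f t2) (f t3) (f t4)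
  let g : V → Fin 4 := fun x =>
    if x = u1 then p else if x = u2 then q else if x = u3 then r else if x = u4 then s else f x
  have a1 : ∀ y, G.Adj u1 y ↔ y = u4 ∨ y = u2 ∨ y = t1 ∨ y = t2 := fun y => by
    rw [← SimpleGraph.mem_neighborSet, h1]; rfl
  have a2 : ∀ y, G.Adj u2 y ↔ y = u1 ∨ y = u3 ∨ y = t2 ∨ y = t3 := fun y => by
    rw [← SimpleGraph.mem_neighborSet, h2]; rfl
  have a3 : ∀ y, G.Adj u3 y ↔ y = u2 ∨ y = u4 ∨ y = t3 ∨ y = t4 := fun y => by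
    rw [← SimpleGraph.mem_neighborSet, h3]; rfl
  have a4 : ∀ y, G.Adj u4 y ↔ y = u3 ∨ y = u1 ∨ y = t4 ∨ y = t1 := fun y => by
    rw [← SimpleGraph.mem_neighborSet, h4]; rfl
  simp only [List.pairwise_cons, List.mem_cons, List.not_mem_nil, or_false, forall_eq_or_imp,
    forall_eq] at hdist
  have g1 : g u1 = p := by grind
  have g2 : g u2 = q := by grind
  have g3 : g u3 = r := by grind
  have g4 : g u4 = s := by grind
  have gt : g t1 = f t1 ∧ g t2 = f t2 ∧ g t3 = f t3 ∧ g t4 = f t4 := by grind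
  have gf : ∀ x, x ∉ ({u1, u2, u3, u4} : Set V) → g x = f x := by
    intro x hx
    simp only [Set.mem_insert_iff, Set.mem_singleton_iff, not_or] at hx
    simp [g, hx]
  have hu : ∀ x ∈ ({u1, u2, u3, u4} : Set V), ∀ y, G.Adj x y → g x ≠ g y := by
    clear_value g
    rintro x (rfl | rfl | rfl | rfl) y hy
    · rcases (a1 y).1 hy with rfl | rfl | rfl | rfl <;> grind
    · rcases (a2 y).1 hy with rfl | rfl | rfl | rfl <;> grind
    · rcases (a3 y).1 hy with rfl | rfl | rfl | rfl <;> grind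
    · rcases (a4 y).1 hy with rfl | rfl | rfl | rfl <;> grind
  refine ⟨SimpleGraph.Coloring.mk g ?_⟩
  intro x y hxy
  by_cases hx : x ∈ ({u1, u2, u3, u4} : Set V)
  · exact hu x hx y hxy
  by_cases hy : y ∈ ({u1, u2, u3, u4} : Set V)
  · exact (hu y hy x hxy.symm).symm
  rw [gf x hx, gf y hy]
  exact hf x y hxy hx hy
end

section
/- Let G be a graph containing distinct vertices u1, u2, u3, u4, t1, t2, t3, t4 such that N_G(u1) = {u4, u2, t1, t2}, N_G(u2) = {u1, u3, u4, t2, t3}, N_G(u3) = {u2, u4, t3, t4}, and N_G(u4) = {u3, u1, u2, t4, t1}. If the graph G − {u1, u2, u3, u4} + {t1t2, t2t3, t3t1} contains a subdivision of K5, then G contains a subdivision of K5. -/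
/-!
The three added edges form a triangle on `t1, t2, t3`. In `G` this triangle is present in
subdivided form, through the deleted vertices: the paths `t1 u1 t2`, `t2 u2 t3` and
`t1 u4 u3 t3` are internally disjoint, with interiors in `{u1, u2, u3, u4}`. Hence replacing
each added edge that a `K5`-subdivision uses by the corresponding path gives a
`K5`-subdivision of `G`.

`exists_expand` performs this replacement along a walk. The resulting walks need not be shown
to be paths directly: `hasK5Subdivision_of_walks` states that walks which pairwise meet only in
common branch ends suffice, since loops can be erased. Two expanded walks do not share a new
vertex, because the new vertex determines the replaced edge, and an edge lying on two of the
original paths would force both paths to have the same pair of ends.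
-/

open SimpleGraph

lemma mem_walkInterior_of_ne {V : Type} {G : SimpleGraph V} {u v x : V} (p : G.Walk u v)
    (hx : x ∈ p.support) (hu : x ≠ u) (hv : x ≠ v) : x ∈ walkInterior p := by
  cases p with
  | nil => simp_all
  | cons h q =>
    have hq : x ∈ q.support := by simpa [hu] using hx
    have hl : q.support.dropLast ++ [q.support.getLast q.support_ne_nil] = q.support :=
      List.dropLast_append_getLast _
    rw [← hl, List.mem_append, List.mem_singleton, Walk.getLast_support] at hq
    simpa [walkInterior] using hq.resolve_right hv

lemma mem_support_of_mem_walkInterior {V : Type} {G : SimpleGraph V} {u v x : V}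
    {p : G.Walk u v} (hx : x ∈ walkInterior p) : x ∈ p.support :=
  List.mem_of_mem_tail (List.mem_of_mem_dropLast hx)

lemma ne_of_mem_walkInterior {V : Type} {G : SimpleGraph V} {u v x : V} {p : G.Walk u v}
    (hp : p.IsPath) (hx : x ∈ walkInterior p) : x ≠ u ∧ x ≠ v := by
  cases p with
  | nil => simp [walkInterior] at hx
  | cons h q =>
    have hx' : x ∈ q.support.dropLast := by simpa [walkInterior] using hx
    have hn := hp.support_nodup
    rw [Walk.support_cons, List.nodup_cons] at hn
    refine ⟨fun h => hn.1 (h ▸ List.mem_of_mem_dropLast hx'), fun h => ?_⟩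
    have hl : q.support.dropLast ++ [q.support.getLast q.support_ne_nil] = q.support :=
      List.dropLast_append_getLast _
    have hn2 := hn.2
    rw [← hl, List.nodup_append] at hn2
    exact hn2.2.2 x hx' v (by simp) h

/-- Walks joining five distinct branch vertices suffice for a `K5`-subdivision, provided that
each non-end vertex of each walk is neither a branch vertex nor on another of the walks. -/
lemma hasK5Subdivision_of_walks {V : Type} {G : SimpleGraph V} (b : Fin 5 → V)
    (hb : Function.Injective b) (Q : ∀ i j : Fin 5, G.Walk (b i) (b j))
    (hQ : ∀ i j, i < j → ∀ x ∈ (Q i j).support, x ≠ b i → x ≠ b j →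
      (∀ k, x ≠ b k) ∧
      ∀ i' j', i' < j' → (i, j) ≠ (i', j') → x ∉ (Q i' j').support) :
    HasK5Subdivision G := by
  classical
  have key : ∀ i j, i < j → ∀ x ∈ walkInterior (Q i j).bypass,
      (∀ k, x ≠ b k) ∧
      ∀ i' j', i' < j' → (i, j) ≠ (i', j') → x ∉ (Q i' j').support := by
    intro i j hij x hx
    obtain ⟨h1, h2⟩ := ne_of_mem_walkInterior (Q i j).bypass_isPath hx
    exact hQ i j hij x ((Q i j).support_bypass_subset_support (mem_support_of_mem_walkInterior hx)) h1 h2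
  refine ⟨b, hb, fun i j => (Q i j).bypass, fun i j _ => (Q i j).bypass_isPath, ?_, ?_⟩
  · intro i j hij k hk
    exact (key i j hij _ hk).1 k rfl
  · intro i j i' j' hij hij' hne x hx hx'
    exact (key i j hij x hx).2 i' j' hij' hne ((Q i' j').support_bypass_subset_support hx')

/-- If every edge of `H` can be replaced by a walk of `G` whose new vertices `x` are tied to the
replaced edge `e` by the relation `R x e`, then so can every walk of `H`. -/
lemma exists_expand {V : Type} {G H : SimpleGraph V} (R : V → Sym2 V → Prop)
    (hR : ∀ a c, H.Adj a c →
      ∃ w : G.Walk a c, ∀ x ∈ w.support, x = a ∨ x = c ∨ R x s(a, c))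
    {u v : V} (p : H.Walk u v) :
    ∃ q : G.Walk u v, ∀ x ∈ q.support, x ∈ p.support ∨ ∃ e ∈ p.edges, R x e := by
  induction p with
  | nil => exact ⟨.nil, by simp⟩
  | @cons a c d h p ih =>
    obtain ⟨q, hq⟩ := ih
    obtain ⟨w, hw⟩ := hR _ _ h
    refine ⟨w.append q, fun x hx => ?_⟩
    rw [Walk.mem_support_append_iff] at hx
    simp only [Walk.support_cons, Walk.edges_cons, List.mem_cons]
    rcases hx with hx | hx
    · rcases hw x hx with rfl | rfl | hx
      · exact .inl (.inl rfl)
      · exact .inl (.inr p.start_mem_support)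
      · exact .inr ⟨_, .inl rfl, hx⟩
    · rcases hq x hx with hx | ⟨e, he, hx⟩
      · exact .inl (.inr hx)
      · exact .inr ⟨e, .inr he, hx⟩

lemma exists_adj_of_mem_support {V : Type} {H : SimpleGraph V} {u v x : V} (p : H.Walk u v)
    (huv : u ≠ v) (hx : x ∈ p.support) : ∃ y, H.Adj x y := by
  obtain ⟨e, he, hxe⟩ :=
    (Walk.mem_support_iff_exists_mem_edges_of_not_nil (Walk.not_nil_of_ne huv)).1 hx
  induction e with | _ y z
  have := p.adj_of_mem_edges he
  rcases Sym2.mem_iff.1 hxe with rfl | rfl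
  exacts [⟨_, this⟩, ⟨_, this.symm⟩]

/-- Subdividing edges preserves `K5`-subdivisions: each edge of `H` is replaced by a walk of `G`
whose new vertices are isolated in `H` and determine the edge they come from. -/
lemma hasK5Subdivision_of_expand {V : Type} {G H : SimpleGraph V} (R : V → Sym2 V → Prop)
    (hR : ∀ a c, H.Adj a c →
      ∃ w : G.Walk a c, ∀ x ∈ w.support, x = a ∨ x = c ∨ R x s(a, c))
    (hiso : ∀ x e, R x e → ∀ y, ¬ H.Adj x y)
    (hfun : ∀ x e e', R x e → R x e' → e = e')
    (hH : HasK5Subdivision H) : HasK5Subdivision G := by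
  obtain ⟨b, hb, P, -, hPb, hPd⟩ := hH
  choose Q hQ using fun i j => exists_expand R hR (P i j)
  have hbne : ∀ i j, i < j → b i ≠ b j := fun i j h h' => h.ne (hb h')
  have hold : ∀ i j, i < j → ∀ x ∈ (P i j).support, ∀ e, ¬ R x e := by
    intro i j hij x hx e hxe
    obtain ⟨y, hy⟩ := exists_adj_of_mem_support _ (hbne i j hij) hx
    exact hiso x e hxe y hy
  have hbranch : ∀ k e, ¬ R (b k) e := by
    intro k e
    by_cases hk : k = 0
    · subst hk
      exact hold 0 1 (by decide) _ (P 0 1).start_mem_support e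
    · exact hold 0 k (Fin.pos_of_ne_zero hk) _ (P 0 k).end_mem_support e
  have hends : ∀ i j i' j', i < j → i' < j' → (i, j) ≠ (i', j') → ∀ x ∈ (P i j).support,
      x ∈ (P i' j').support → x = b i ∨ x = b j := by
    intro i j i' j' hij hij' hne x hx hx'
    by_contra! hc
    exact hPd i j i' j' hij hij' hne x (mem_walkInterior_of_ne _ hx hc.1 hc.2) hx'
  refine hasK5Subdivision_of_walks b hb Q fun i j hij x hx hxi hxj => ?_
  rcases hQ i j x hx with hx | ⟨e, he, hxe⟩
  · have hint := mem_walkInterior_of_ne _ hx hxi hxj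
    refine ⟨fun k hk => hPb i j hij k (hk ▸ hint), fun i' j' hij' hne hx' => ?_⟩
    rcases hQ i' j' x hx' with hx' | ⟨e, -, hxe⟩
    · exact hPd i j i' j' hij hij' hne x hint hx'
    · exact hold i j hij x hx e hxe
  · refine ⟨fun k hk => hbranch k e (hk ▸ hxe), fun i' j' hij' hne hx' => ?_⟩
    rcases hQ i' j' x hx' with hx' | ⟨e', he', hxe'⟩
    · exact hold i' j' hij' x hx' e hxe
    · obtain rfl := hfun x e e' hxe hxe'
      induction e with | _ y z
      have hyz : y ≠ z := ((P i j).adj_of_mem_edges he).ne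
      -- Both ends of `e` lie on both paths, so they are the two ends of each path.
      have y1 := (P i j).fst_mem_support_of_mem_edges he
      have z1 := (P i j).snd_mem_support_of_mem_edges he
      have y2 := (P i' j').fst_mem_support_of_mem_edges he'
      have z2 := (P i' j').snd_mem_support_of_mem_edges he'
      have a1 := hends i j i' j' hij hij' hne y y1 y2
      have a2 := hends i j i' j' hij hij' hne z z1 z2
      have a3 := hends i' j' i j hij' hij hne.symm y y2 y1
      have a4 := hends i' j' i j hij' hij hne.symm z z2 z1
      have hinj : ∀ k l, b k = b l → k = l := fun k l h => hb h
      grind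

/-- If `N_G(u1) = {u4, u2, t1, t2}`, `N_G(u2) = {u1, u3, u4, t2, t3}`,
`N_G(u3) = {u2, u4, t3, t4}`, `N_G(u4) = {u3, u1, u2, t4, t1}`, and
`G − {u1, u2, u3, u4} + {t1t2, t2t3, t3t1}` contains a subdivision of `K5`, then so
does `G`. -/
theorem statement14 {V : Type} (G : SimpleGraph V) (u1 u2 u3 u4 t1 t2 t3 t4 : V)
    (hdist : List.Pairwise (· ≠ ·) [u1, u2, u3, u4, t1, t2, t3, t4])
    (h1 : G.neighborSet u1 = {u4, u2, t1, t2})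
    (h2 : G.neighborSet u2 = {u1, u3, u4, t2, t3})
    (h3 : G.neighborSet u3 = {u2, u4, t3, t4})
    (h4 : G.neighborSet u4 = {u3, u1, u2, t4, t1})
    (hsub : HasK5Subdivision
      (deleteAdd G {u1, u2, u3, u4} {(t1, t2), (t2, t3), (t3, t1)})) :
    HasK5Subdivision G := by
  simp only [List.pairwise_cons, List.mem_cons, List.not_mem_nil, or_false, ne_eq,
    forall_eq_or_imp, forall_eq] at hdist
  have a1 : ∀ x, G.Adj u1 x ↔ x ∈ ({u4, u2, t1, t2} : Set V) := fun x => by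
    rw [← h1, mem_neighborSet]
  have a2 : ∀ x, G.Adj u2 x ↔ x ∈ ({u1, u3, u4, t2, t3} : Set V) := fun x => by
    rw [← h2, mem_neighborSet]
  have a3 : ∀ x, G.Adj u3 x ↔ x ∈ ({u2, u4, t3, t4} : Set V) := fun x => by
    rw [← h3, mem_neighborSet]
  have a4 : ∀ x, G.Adj u4 x ↔ x ∈ ({u3, u1, u2, t4, t1} : Set V) := fun x => by
    rw [← h4, mem_neighborSet]
  have e11 : G.Adj u1 t1 := by simp [a1]
  have e12 : G.Adj u1 t2 := by simp [a1]
  have e22 : G.Adj u2 t2 := by simp [a2]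
  have e23 : G.Adj u2 t3 := by simp [a2]
  have e33 : G.Adj u3 t3 := by simp [a3]
  have e43 : G.Adj u4 u3 := by simp [a4]
  have e41 : G.Adj u4 t1 := by simp [a4]
  -- Each `u` is tied to the triangle edge whose replacement path runs through it.
  let R : V → Sym2 V → Prop := fun x e =>
    (x = u1 ∧ e = s(t1, t2)) ∨ (x = u2 ∧ e = s(t2, t3)) ∨ ((x = u3 ∨ x = u4) ∧ e = s(t3, t1))
  refine hasK5Subdivision_of_expand R ?_ ?_ ?_ hsub
  · have tri : ∀ a c, (a, c) ∈ ({(t1, t2), (t2, t3), (t3, t1)} : Set (V × V)) →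
        ∃ w : G.Walk a c, ∀ x ∈ w.support, x = a ∨ x = c ∨ R x s(a, c) := by
      intro a c h
      simp only [Set.mem_insert_iff, Set.mem_singleton_iff, Prod.mk.injEq] at h
      rcases h with ⟨rfl, rfl⟩ | ⟨rfl, rfl⟩ | ⟨rfl, rfl⟩
      · exact ⟨.cons e11.symm (.cons e12 .nil), by simp [R]⟩
      · exact ⟨.cons e22.symm (.cons e23 .nil), by simp [R]⟩
      · exact ⟨.cons e33.symm (.cons e43.symm (.cons e41 .nil)), by simp [R]⟩
    intro a c h
    rw [deleteAdd, fromRel_adj] at h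
    rcases h with ⟨-, (h | h) | (h | h)⟩
    · exact ⟨.cons h.1 .nil, by simp⟩
    · exact tri a c h
    · exact ⟨.cons h.1.symm .nil, by simp⟩
    · obtain ⟨w, hw⟩ := tri c a h
      refine ⟨w.reverse, fun x hx => ?_⟩
      rw [Walk.support_reverse, List.mem_reverse] at hx
      rw [Sym2.eq_swap]
      have := hw x hx
      tauto
  · intro x e hx y hxy
    rw [deleteAdd, fromRel_adj] at hxy
    simp only [Set.mem_insert_iff, Set.mem_singleton_iff, Prod.mk.injEq] at hxy
    simp only [R] at hx
    grind
  · intro x e e' h h'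
    simp only [R] at h h'
    grind
end

section
/- Let G be a graph containing distinct vertices u1, u2, u3, u4, t1, t2, t3, t4 such that N_G(u1) = {u4, u2, t1, t2}, N_G(u2) = {u1, u3, u4, t2, t3}, N_G(u3) = {u2, u4, t3, t4}, and N_G(u4) = {u3, u1, u2, t4, t1}. If the graph G − {u1, u2, u3, u4} + {t1t2, t2t3, t3t1} is 4-colorable, then G is 4-colorable. -/
/-!
A 4-coloring `c` of `G − {u1, u2, u3, u4} + {t1t2, t2t3, t3t1}` gives `t1, t2, t3` three distinct
colors. For each of the four possible colors of `t4`, the vertices `u1, u2, u3, u4`, which induce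
`K4` minus the edge `u1u3`, can be colored compatibly with the `t`-neighbors
(`exists_extension_colors`). Using these colors on the `ui` and `c` elsewhere colors `G`.
-/

open SimpleGraph

set_option synthInstance.maxHeartbeats 400000 in
set_option synthInstance.maxSize 2000 in
/-- Colors for `u1, u2, u3, u4` (named `a, b, c, d`), given the colors `p, q, r, s` of
`t1, t2, t3, t4`. -/
lemma exists_extension_colors : ∀ p q r s : Fin 4, p ≠ q → q ≠ r → r ≠ p →
    ∃ a : Fin 4, (a ≠ p ∧ a ≠ q) ∧ ∃ b : Fin 4, (b ≠ q ∧ b ≠ r ∧ a ≠ b) ∧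
    ∃ c : Fin 4, (c ≠ r ∧ c ≠ s ∧ b ≠ c) ∧
    ∃ d : Fin 4, d ≠ s ∧ d ≠ p ∧ a ≠ d ∧ b ≠ d ∧ c ≠ d := by
  decide

/-- If `N_G(u1) = {u4, u2, t1, t2}`, `N_G(u2) = {u1, u3, u4, t2, t3}`,
`N_G(u3) = {u2, u4, t3, t4}`, `N_G(u4) = {u3, u1, u2, t4, t1}`, and
`G − {u1, u2, u3, u4} + {t1t2, t2t3, t3t1}` is 4-colorable, then `G` is 4-colorable. -/
theorem statement15 {V : Type} (G : SimpleGraph V) (u1 u2 u3 u4 t1 t2 t3 t4 : V)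
    (hdist : List.Pairwise (· ≠ ·) [u1, u2, u3, u4, t1, t2, t3, t4])
    (h1 : G.neighborSet u1 = {u4, u2, t1, t2})
    (h2 : G.neighborSet u2 = {u1, u3, u4, t2, t3})
    (h3 : G.neighborSet u3 = {u2, u4, t3, t4})
    (h4 : G.neighborSet u4 = {u3, u1, u2, t4, t1})
    (hcol : (deleteAdd G {u1, u2, u3, u4} {(t1, t2), (t2, t3), (t3, t1)}).Colorable 4) :
    G.Colorable 4 := by
  classical
  obtain ⟨c⟩ := hcol
  -- The neighborhoods of the `ui` as membership criteria.
  have n1 : ∀ w, G.Adj u1 w ↔ w = u4 ∨ w = u2 ∨ w = t1 ∨ w = t2 := fun w => by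
    rw [← mem_neighborSet, h1]; rfl
  have n2 : ∀ w, G.Adj u2 w ↔ w = u1 ∨ w = u3 ∨ w = u4 ∨ w = t2 ∨ w = t3 := fun w => by
    rw [← mem_neighborSet, h2]; rfl
  have n3 : ∀ w, G.Adj u3 w ↔ w = u2 ∨ w = u4 ∨ w = t3 ∨ w = t4 := fun w => by
    rw [← mem_neighborSet, h3]; rfl
  have n4 : ∀ w, G.Adj u4 w ↔ w = u3 ∨ w = u1 ∨ w = u2 ∨ w = t4 ∨ w = t1 := fun w => by
    rw [← mem_neighborSet, h4]; rfl
  simp only [List.pairwise_cons, List.mem_cons, List.not_mem_nil, or_false, forall_eq_or_imp,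
    forall_eq] at hdist
  have c12 : c t1 ≠ c t2 := c.valid (by simp [deleteAdd]; grind)
  have c23 : c t2 ≠ c t3 := c.valid (by simp [deleteAdd]; grind)
  have c31 : c t3 ≠ c t1 := c.valid (by simp [deleteAdd]; grind)
  have hc : ∀ v w, G.Adj v w → v ≠ u1 → v ≠ u2 → v ≠ u3 → v ≠ u4 →
      w ≠ u1 → w ≠ u2 → w ≠ u3 → w ≠ u4 → c v ≠ c w := by
    intro v w h _ _ _ _ _ _ _ _
    exact c.valid (by simp [deleteAdd, h.ne, *])
  obtain ⟨a1, ha1, a2, ha2, a3, ha3, a4, ha4⟩ :=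
    exists_extension_colors _ _ _ (c t4) c12 c23 c31
  let f : V → Fin 4 := fun v =>
    if v = u1 then a1 else if v = u2 then a2 else if v = u3 then a3 else if v = u4 then a4 else c v
  -- Edges with an end among the `ui`; by symmetry this end comes first.
  have key : ∀ v w, G.Adj v w → (v = u1 ∨ v = u2 ∨ v = u3 ∨ v = u4) → f v ≠ f w := by
    rintro v w h (rfl | rfl | rfl | rfl)
    · rcases (n1 w).1 h with rfl | rfl | rfl | rfl <;> grind
    · rcases (n2 w).1 h with rfl | rfl | rfl | rfl | rfl <;> grind
    · rcases (n3 w).1 h with rfl | rfl | rfl | rfl <;> grind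
    · rcases (n4 w).1 h with rfl | rfl | rfl | rfl | rfl <;> grind
  refine ⟨Coloring.mk f ?_⟩
  intro v w h
  by_cases hv : v = u1 ∨ v = u2 ∨ v = u3 ∨ v = u4
  · exact key v w h hv
  by_cases hw : w = u1 ∨ w = u2 ∨ w = u3 ∨ w = u4
  · exact (key w v h.symm hw).symm
  have := hc v w h
  grind
end

section
/- Let H be the 8-vertex graph with vertex set S ∪ {u, v, w}, where S = {t1, t2, t3, t4, t5}, whose only edges are given by N(u) = {v, t1, t2, t3}, N(v) = {u, w, t1, t3, t4}, N(w) = {v, t1, t4, t5}. Then H contains no S-good wheel; that is, there is no wheel W contained in H, with center x, such that S ∩ V(W) ⊆ N_H(x). -/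
/-!
Every vertex of a cycle has two neighbours on it, so a vertex with at most one available
neighbour cannot lie on the rim of a wheel (`not_mem_cycle_of_unique_nbr`). In an `S`-good
wheel with centre `w` the rim avoids `w` and all vertices of `S` not adjacent to `w`. For each
of the three centres `5, 6, 7` outside `S`, discarding vertices in this way leaves at most two
neighbours of `w` that can lie on the rim, so three spokes are impossible.
-/

open SimpleGraph

/-- Every vertex of a cycle has degree two in it, so its neighbours on the cycle cannot
all coincide with a single vertex `y`. -/
lemma not_mem_cycle_of_unique_nbr {V : Type} {G : SimpleGraph V} {u : V} {C : G.Walk u u}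
    (hC : C.IsCycle) (x y : V) (h : ∀ z ∈ C.support, G.Adj x z → z = y) :
    x ∉ C.support := by
  intro hx
  have h2 := hC.ncard_neighborSet_toSubgraph_eq_two hx
  have hsub : C.toSubgraph.neighborSet x ⊆ {y} := fun z hz =>
    h z (C.mem_verts_toSubgraph.1 (C.toSubgraph.edge_vert (C.toSubgraph.adj_symm hz)))
      (C.toSubgraph.adj_sub hz)
  have := Set.ncard_le_ncard hsub
  rw [Set.ncard_singleton] at this
  omega

instance : DecidableRel Obs5.Adj := fun a b =>
  decidable_of_iff ((s(a, b) = s(5,6) ∨ s(a, b) = s(5,0) ∨ s(a, b) = s(5,1) ∨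
    s(a, b) = s(5,2) ∨ s(a, b) = s(6,7) ∨ s(a, b) = s(6,0) ∨ s(a, b) = s(6,2) ∨
    s(a, b) = s(6,3) ∨ s(a, b) = s(7,0) ∨ s(a, b) = s(7,3) ∨ s(a, b) = s(7,4)) ∧ a ≠ b)
    (by simp only [Obs5, SimpleGraph.fromEdgeSet_adj, Set.mem_insert_iff,
          Set.mem_singleton_iff])

/-- The 8-vertex obstruction graph `O5` (with `S = {t1,...,t5} =
{0, 1, 2, 3, 4}`) contains no `S`-good wheel. -/
theorem statement16 :
    ¬ HasGoodWheel (⊤ : Obs5.Subgraph) ({0, 1, 2, 3, 4} : Set (Fin 8)) := by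
  rintro ⟨W, w, -, ⟨u, C, T, hC, hw, hT, hcard, hverts, hedge⟩, hwS, hgood⟩
  have hTadj : ∀ t ∈ T, Obs5.Adj w t := fun t ht => by
    have : s(w, t) ∈ W.edgeSet := by rw [hedge]; exact Or.inr ⟨t, ht, rfl⟩
    exact W.adj_sub this
  have hS : ∀ z ∈ C.support, z ∈ ({0, 1, 2, 3, 4} : Set (Fin 8)) → Obs5.Adj w z :=
    fun z hz hzS => hgood z hzS (by rw [hverts]; exact Or.inr hz)
  have key : ∀ a b : Fin 8, (∀ t ∈ T, t = a ∨ t = b) → False := fun a b h => by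
    have h1 := Set.ncard_le_ncard (show T ⊆ {a, b} from h)
    have h2 := Set.ncard_insert_le a {b}
    rw [Set.ncard_singleton] at h2
    omega
  simp only [Set.mem_insert_iff, Set.mem_singleton_iff] at hwS hS
  have hw' : w = 5 ∨ w = 6 ∨ w = 7 := by
    clear * - hwS; revert w; decide
  rcases hw' with rfl | rfl | rfl
  -- Centre 5: vertices 1 and 2 are pruned, leaving only 0 and 6 as spoke ends.
  · have h1 : (1 : Fin 8) ∉ C.support := not_mem_cycle_of_unique_nbr hC 1 5
      fun z _ hadj => by revert hadj; clear * -; revert z; decide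
    have h2 : (2 : Fin 8) ∉ C.support := not_mem_cycle_of_unique_nbr hC 2 6
      fun z hz hadj => by
        have : z = 5 ∨ z = 6 := by clear hz; revert hadj; revert z; decide
        exact this.resolve_left fun e => hw (e ▸ hz)
    refine key 0 6 fun t ht => ?_
    have : t = 0 ∨ t = 1 ∨ t = 2 ∨ t = 6 := by
      have := hTadj t ht; clear ht; revert this; revert t; decide
    have := hT ht
    grind
  -- Centre 6: 2 and 3 are pruned, and 1 is no neighbour of 6, which leaves 0 as the only
  -- possible neighbour of 5 on the rim; hence 5 is pruned too.
  · have h2 : (2 : Fin 8) ∉ C.support := not_mem_cycle_of_unique_nbr hC 2 5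
      fun z hz hadj => by
        have : z = 5 ∨ z = 6 := by clear hz; revert hadj; revert z; decide
        exact this.resolve_right fun e => hw (e ▸ hz)
    have h3 : (3 : Fin 8) ∉ C.support := not_mem_cycle_of_unique_nbr hC 3 7
      fun z hz hadj => by
        have : z = 6 ∨ z = 7 := by clear hz; revert hadj; revert z; decide
        exact this.resolve_left fun e => hw (e ▸ hz)
    refine key 0 7 fun t ht => ?_
    have : t = 0 ∨ t = 2 ∨ t = 3 ∨ t = 5 ∨ t = 7 := by
      have := hTadj t ht; clear ht; revert this; revert t; decide
    have h1 : (1 : Fin 8) ∉ C.support := fun h => absurd (hS 1 h (by decide)) (by decide)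
    have h5 : (5 : Fin 8) ∉ C.support := not_mem_cycle_of_unique_nbr hC 5 0
      fun z hz hadj => by
        have : z = 0 ∨ z = 1 ∨ z = 2 ∨ z = 6 := by clear hz; revert hadj; revert z; decide
        grind
    have := hT ht
    grind
  -- Centre 7: vertices 4 and 3 are pruned, leaving only 0 and 6 as spoke ends.
  · have h4 : (4 : Fin 8) ∉ C.support := not_mem_cycle_of_unique_nbr hC 4 7
      fun z _ hadj => by revert hadj; clear * -; revert z; decide
    have h3 : (3 : Fin 8) ∉ C.support := not_mem_cycle_of_unique_nbr hC 3 6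
      fun z hz hadj => by
        have : z = 6 ∨ z = 7 := by clear hz; revert hadj; revert z; decide
        exact this.resolve_right fun e => hw (e ▸ hz)
    refine key 0 6 fun t ht => ?_
    have : t = 0 ∨ t = 3 ∨ t = 4 ∨ t = 6 := by
      have := hTadj t ht; clear ht; revert this; revert t; decide
    have := hT ht
    grind
end

section
/- Let H be the 9-vertex graph with vertex set S ∪ {u, v, w, z}, where S = {t1, t2, t3, t4, t5}, whose only edges are given by N(z) = {u, v, w, t1, t2, t5}, N(u) = {v, z, t2, t3}, N(v) = {u, w, z, t3, t4}, N(w) = {v, z, t4, t5}. Then H contains no S-good wheel; that is, there is no wheel W contained in H, with center x, such that S ∩ V(W) ⊆ N_H(x). -/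
/-!
The rim `A` of a wheel is the vertex set of a cycle, so every vertex of `A` has two distinct
neighbours inside `A` (`exists_two_rim_neighbors`).  Hence a vertex with at most one possible
neighbour in `A` is not in `A` (`not_mem_of_unique`), and such vertices can be peeled off one
after another.  Goodness of a wheel with centre `x` removes every `t_i` not adjacent to `x`
from the rim.

* Centre `z` or `v`: the vertices allowed on the rim induce a forest, so peeling removes all
  of them, whereas the rim is nonempty.
* Centre `u` or `w`: peeling removes every `t_i`, leaving only two neighbours of the centre
  (`v` and `z`) that can lie on the rim, too few for three spokes.
-/

open SimpleGraph

/-- The neighbours of the vertices of `Obs6`, spelled out. -/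
lemma obs6_adj (x y : Fin 9) : Obs6.Adj x y ↔
    y ∈ (![[8], [8, 5], [5, 6], [6, 7], [8, 7], [6, 8, 1, 2], [5, 7, 8, 2, 3], [6, 8, 3, 4],
      [5, 6, 7, 0, 1, 4]] x : List (Fin 9)) := by
  simp only [Obs6, SimpleGraph.fromEdgeSet_adj, Set.mem_insert_iff, Set.mem_singleton_iff]
  revert x y
  decide

lemma exists_two_rim_neighbors {V : Type} {G : SimpleGraph V} {u : V} {C : G.Walk u u}
    (hC : C.IsCycle) {x : V} (hx : x ∈ C.support) :
    ∃ a ∈ C.support, ∃ b ∈ C.support, a ≠ b ∧ G.Adj x a ∧ G.Adj x b := by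
  obtain ⟨a, b, hab, h⟩ := Set.ncard_eq_two.mp (hC.ncard_neighborSet_toSubgraph_eq_two hx)
  have key : ∀ y ∈ C.toSubgraph.neighborSet x, y ∈ C.support ∧ G.Adj x y := fun y hy =>
    ⟨(C.mem_verts_toSubgraph).mp (C.toSubgraph.edge_vert hy.symm),
      C.toSubgraph.adj_sub hy⟩
  have ha := key a (by simp [h])
  have hb := key b (by simp [h])
  exact ⟨a, ha.1, b, hb.1, hab, ha.2, hb.2⟩

/-- The peeling step: a vertex whose only possible neighbour on the rim is `c` is not on the
rim. -/
lemma not_mem_of_unique {V : Type} {G : SimpleGraph V} {A : Set V}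
    (hA : ∀ x ∈ A, ∃ a ∈ A, ∃ b ∈ A, a ≠ b ∧ G.Adj x a ∧ G.Adj x b) (x c : V)
    (h : ∀ y ∈ A, G.Adj x y → y = c) : x ∉ A := by
  intro hx
  obtain ⟨a, ha, b, hb, hab, h1, h2⟩ := hA x hx
  exact hab ((h a ha h1).trans (h b hb h2).symm)

/-- The 9-vertex obstruction graph `O6` (with `S = {t1,...,t5} =
{0, 1, 2, 3, 4}`) contains no `S`-good wheel. -/
theorem statement17 :
    ¬ HasGoodWheel (⊤ : Obs6.Subgraph) ({0, 1, 2, 3, 4} : Set (Fin 9)) := by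
  rintro ⟨W, w, -, ⟨r, C, T, hC, hw, hT, hcard, hverts, hedges⟩, hwS, hgood⟩
  obtain ⟨A, hAdef⟩ : ∃ A : Set (Fin 9), A = {x | x ∈ C.support} := ⟨_, rfl⟩
  have hA : ∀ x ∈ A, ∃ a ∈ A, ∃ b ∈ A, a ≠ b ∧ Obs6.Adj x a ∧ Obs6.Adj x b := by
    subst hAdef
    exact fun x hx => exists_two_rim_neighbors hC hx
  have hr : r ∈ A := by simp [hAdef]
  have hwA : w ∉ A := by simpa [hAdef] using hw
  have hTA : T ⊆ A := by rwa [hAdef]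
  have hTw : ∀ x ∈ T, Obs6.Adj w x := by
    intro x hx
    have : s(w, x) ∈ W.edgeSet := by
      rw [hedges]
      exact Or.inr ⟨x, hx, rfl⟩
    exact W.adj_sub this
  have hgood' : ∀ s ∈ ({0, 1, 2, 3, 4} : Set (Fin 9)), ¬ Obs6.Adj w s → s ∉ A := by
    intro s hs hn hsA
    refine hn (SimpleGraph.Subgraph.top_adj.mp (hgood s hs ?_))
    rw [hverts, ← hAdef]
    exact Or.inr hsA
  -- With centre `u` or `w`, all spokes end in `{v, z}`.
  have hfew : ¬ T ⊆ {6, 8} := by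
    intro h
    have h1 := Set.ncard_le_ncard h (Set.toFinite _)
    have h2 := Set.ncard_pair (show (6 : Fin 9) ≠ 8 by decide)
    omega
  have peel := not_mem_of_unique hA
  simp only [obs6_adj] at peel hTw hgood'
  have h0 : 0 ∉ A := peel 0 8 (by simp)
  fin_cases w
  · simp at hwS
  · simp at hwS
  · simp at hwS
  · simp at hwS
  · simp at hwS
  · have h3 : 3 ∉ A := hgood' 3 (by simp) (by decide)
    have h4 : 4 ∉ A := hgood' 4 (by simp) (by decide)
    have h1 : 1 ∉ A := peel 1 8 (by simp; grind)
    have h2 : 2 ∉ A := peel 2 6 (by simp; grind)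
    refine hfew fun x hx => ?_
    have hxA := hTA hx
    have := hTw x hx
    simp at this ⊢
    grind
  · have h1 : 1 ∉ A := hgood' 1 (by simp) (by decide)
    have h4 : 4 ∉ A := hgood' 4 (by simp) (by decide)
    have h2 : 2 ∉ A := peel 2 5 (by simp; grind)
    have h3 : 3 ∉ A := peel 3 7 (by simp; grind)
    have h5 : 5 ∉ A := peel 5 8 (by simp; grind)
    have h7 : 7 ∉ A := peel 7 8 (by simp; grind)
    have h8 : 8 ∉ A := peel 8 8 (by simp; grind)
    fin_cases r <;> contradiction
  · have h1 : 1 ∉ A := hgood' 1 (by simp) (by decide)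
    have h2 : 2 ∉ A := hgood' 2 (by simp) (by decide)
    have h3 : 3 ∉ A := peel 3 6 (by simp; grind)
    have h4 : 4 ∉ A := peel 4 8 (by simp; grind)
    refine hfew fun x hx => ?_
    have hxA := hTA hx
    have := hTw x hx
    simp at this ⊢
    grind
  · have h2 : 2 ∉ A := hgood' 2 (by simp) (by decide)
    have h3 : 3 ∉ A := hgood' 3 (by simp) (by decide)
    have h1 : 1 ∉ A := peel 1 5 (by simp; grind)
    have h4 : 4 ∉ A := peel 4 7 (by simp; grind)
    have h5 : 5 ∉ A := peel 5 6 (by simp; grind)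
    have h7 : 7 ∉ A := peel 7 6 (by simp; grind)
    have h6 : 6 ∉ A := peel 6 6 (by simp; grind)
    fin_cases r <;> contradiction
end

section
/- Let G be a graph containing distinct vertices p, q, r, s, t, u, v, w, z, x such that the following are edges of G: zp, zq, zt, zu, zv, zw, uq, uv, ur, vw, vr, vs, wt, ws, qp, qx. If the graph G − {q, u, v, w, z} + {rp, rt, pt, px, ts} contains a subdivision of K5, then G contains a subdivision of K5. -/
/-!
Let `G'` be `G − {q, u, v, w, z} + {rp, rt, pt, px, ts}`, and fix a subdivision of `K5` in `G'`. The
deleted vertices are free to replace the added edges that the subdivision uses: `px` by `p-q-x`,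
`ts` by `t-w-s`, `pt` by `p-z-t`, `rp` by `p-q-u-r` or `p-z-u-r`, and `rt` by `t-w-v-r` or
`t-z-v-r`. The edges of `G` occurring here are permuted by the symmetry `p ↔ t`, `q ↔ w`, `u ↔ v`,
`x ↔ s`.

* Suppose that at each of `p`, `t` one of the three added edges is unused. If `pt` is used, then
  `z` serves `pt`, `q` serves whichever of `px`, `rp` is used, and `w` whichever of `ts`, `rt`. If
  `pt` is unused, then `z` can relieve `q` or `w`. This is enough unless `px`, `rp`, `rt`, `ts` are
  all used. In that case `p` and `t` are not both branch vertices, because the subdivision may be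
  chosen so that adjacent branch vertices are joined by an edge, and `pt` would then be used. If
  `p`, say, is not a branch vertex, then `px` and `rp` lie on the same path and can share `q`
  (`Gadget.of_unused`).
* If `px`, `rp`, `pt` are all used, then `p` is a branch vertex. Its role passes to `q`, with the
  edges `qx`, `qr`, `qt`, and `p` becomes an inner vertex of the fourth path (`Strong.split`). Now
  `u` subdivides `qr` and `z` subdivides `qt`. If the edges `ts`, `tr`, `tq` are again all used,
  then `t` is split in the same way and its role passes to `w` (`Gadget.of_split`). The case where
  `ts`, `rt`, `pt` are all used is symmetric.

To make the disjointness of rerouted paths automatic, subdivisions are handled as labellings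
(`Labelled`): each vertex is reserved for at most one of the ten paths. Rerouting
(`Strong.reroute`) then amounts to handing each free vertex to the path containing a given edge.
-/

open SimpleGraph

namespace K5Gadget

/-! ### Walks confined to a set -/

/-- `Reach G A a c`: some walk of `G` from `a` to `c` stays inside `A` (endpoints included). -/
def Reach {V : Type} (G : SimpleGraph V) (A : Set V) (a c : V) : Prop :=
  ∃ W : G.Walk a c, ∀ y ∈ W.support, y ∈ A

section Basic

variable {V : Type} {G H : SimpleGraph V}

theorem Reach.refl {A : Set V} {a : V} (ha : a ∈ A) : Reach G A a a :=
  ⟨Walk.nil, by simpa using ha⟩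

theorem Reach.symm {A : Set V} {a c : V} (h : Reach G A a c) : Reach G A c a := by
  obtain ⟨W, hW⟩ := h
  exact ⟨W.reverse, by simpa using hW⟩

theorem Reach.trans {A : Set V} {a c d : V} (h : Reach G A a c) (h' : Reach G A c d) :
    Reach G A a d := by
  obtain ⟨W, hW⟩ := h
  obtain ⟨W', hW'⟩ := h'
  refine ⟨W.append W', fun y hy => ?_⟩
  rcases Walk.mem_support_append_iff _ _ |>.1 hy with hy | hy
  · exact hW y hy
  · exact hW' y hy

theorem Reach.mono {A B : Set V} {a c : V} (hAB : A ⊆ B) (h : Reach G A a c) :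
    Reach G B a c := by
  obtain ⟨W, hW⟩ := h
  exact ⟨W, fun y hy => hAB (hW y hy)⟩

theorem Reach.edge {A : Set V} {a c : V} (h : G.Adj a c) (ha : a ∈ A) (hc : c ∈ A) :
    Reach G A a c :=
  ⟨h.toWalk, by simp [ha, hc]⟩

/-- A walk of `H` can be replaced by a walk of `G` as soon as each of its edges can. -/
theorem reach_of_walk {A : Set V} {a c : V} (W : H.Walk a c) (hc : c ∈ A)
    (h : ∀ y y', s(y, y') ∈ W.edges → Reach G A y y') : Reach G A a c := by
  induction W with
  | nil => exact Reach.refl hc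
  | cons hadj W ih =>
    exact (h _ _ (by simp)).trans (ih hc fun y y' hy => h y y' (by simp [hy]))

/-! ### Edges of a path at a vertex -/

/-- Once a path has left its first vertex along the edge `pa`, it does not return to it. -/
theorem exists_tail {p a c : V} (W : H.Walk p c) (hW : W.IsPath) (ha : s(p, a) ∈ W.edges) :
    ∃ W' : H.Walk a c, p ∉ W'.support ∧ W'.support ⊆ W.support ∧ W'.edges ⊆ W.edges := by
  cases W with
  | nil => simp at ha
  | @cons _ d _ hadj W =>
    rw [Walk.cons_isPath_iff] at hW
    have hd : a = d := by
      simp only [Walk.edges_cons, List.mem_cons] at ha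
      rcases ha with ha | ha
      · simp only [Sym2.eq_iff] at ha
        grind
      · exact absurd (Walk.fst_mem_support_of_mem_edges _ ha) hW.2
    subst hd
    exact ⟨W, hW.2, by simp, by simp⟩

theorem first_edge_unique {p a a' c : V} (W : H.Walk p c) (hW : W.IsPath)
    (ha : s(p, a) ∈ W.edges) (ha' : s(p, a') ∈ W.edges) : a = a' := by
  cases W with
  | nil => simp at ha
  | @cons _ d _ hadj W =>
    rw [Walk.cons_isPath_iff] at hW
    have key : ∀ e, s(p, e) ∈ (Walk.cons hadj W).edges → e = d := by
      intro e ha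
      simp only [Walk.edges_cons, List.mem_cons] at ha
      rcases ha with ha | ha
      · simp only [Sym2.eq_iff] at ha
        grind
      · exact absurd (Walk.fst_mem_support_of_mem_edges _ ha) hW.2
    rw [key a ha, key a' ha']

theorem path_degree_le_two {p a₁ a₂ a₃ c d : V} (W : H.Walk c d) (hW : W.IsPath)
    (h₁ : s(p, a₁) ∈ W.edges) (h₂ : s(p, a₂) ∈ W.edges) (h₃ : s(p, a₃) ∈ W.edges) :
    a₁ = a₂ ∨ a₁ = a₃ ∨ a₂ = a₃ := by
  classical
  have hp : p ∈ W.support := Walk.fst_mem_support_of_mem_edges _ h₁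
  have hd : (W.dropUntil p hp).IsPath := hW.dropUntil hp
  have ht : (W.takeUntil p hp).reverse.IsPath := (hW.takeUntil hp).reverse
  have key : ∀ e, s(p, e) ∈ W.edges →
      s(p, e) ∈ (W.takeUntil p hp).reverse.edges ∨ s(p, e) ∈ (W.dropUntil p hp).edges := by
    intro e he
    rw [← W.take_spec hp, Walk.edges_append, List.mem_append] at he
    simpa using he
  have ud := fun e e' => first_edge_unique (a := e) (a' := e') _ hd
  have ut := fun e e' => first_edge_unique (a := e) (a' := e') _ ht
  grind

/-! ### Labelled subdivisions of `K5` -/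

/-- A subdivision of `K5` presented by branch vertices `b` and a labelling: `lab y = some s(i, j)`
reserves the vertex `y` for the path joining `b i` to `b j`. Disjointness of the paths is then
automatic. -/
structure Labelled (G : SimpleGraph V) (b : Fin 5 → V) (lab : V → Option (Sym2 (Fin 5))) :
    Prop where
  inj : Function.Injective b
  lab_b : ∀ k, lab (b k) = none
  reach : ∀ i j, i ≠ j → Reach G {y | y = b i ∨ y = b j ∨ lab y = some s(i, j)} (b i) (b j)

/-- A labelled subdivision with chosen paths: `P j i` is the reverse of `P i j`, and adjacent
branch vertices are joined by a single edge (`short`). -/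
structure Strong (G : SimpleGraph V) (b : Fin 5 → V) (lab : V → Option (Sym2 (Fin 5)))
    (P : ∀ i j, G.Walk (b i) (b j)) : Prop where
  inj : Function.Injective b
  lab_b : ∀ k, lab (b k) = none
  path : ∀ i j, i ≠ j → (P i j).IsPath
  symm : ∀ i j, P j i = (P i j).reverse
  supp : ∀ i j, i ≠ j → ∀ y ∈ (P i j).support, y = b i ∨ y = b j ∨ lab y = some s(i, j)
  short : ∀ i j, i ≠ j → G.Adj (b i) (b j) → s(b i, b j) ∈ (P i j).edges

theorem mem_interior {a c : V} (W : G.Walk a c) {y : V} (hy : y ∈ W.support) :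
    y = a ∨ y = c ∨ y ∈ walkInterior W := by
  unfold walkInterior
  rw [Walk.mem_support_iff] at hy
  rcases hy with hy | hy
  · exact Or.inl hy
  · have hne : W.support.tail ≠ [] := List.ne_nil_of_mem hy
    have hl : W.support.tail.getLast hne = c := by
      rw [List.getLast_tail]; simp
    rw [← List.dropLast_append_getLast hne, List.mem_append] at hy
    rcases hy with hy | hy
    · exact Or.inr (Or.inr hy)
    · right; left; simpa [hl] using hy

theorem interior_mem {a c : V} (W : G.Walk a c) (hW : W.IsPath) {y : V}
    (hy : y ∈ walkInterior W) : y ∈ W.support ∧ y ≠ a ∧ y ≠ c := by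
  unfold walkInterior at hy
  have hy1 := List.mem_of_mem_dropLast hy
  have hnd := hW.support_nodup
  refine ⟨List.mem_of_mem_tail hy1, ?_, ?_⟩
  · rintro rfl
    rw [← Walk.cons_tail_support] at hnd
    exact (List.nodup_cons.1 hnd).1 hy1
  · rintro rfl
    have hne : W.support.tail ≠ [] := List.ne_nil_of_mem hy1
    have hl : W.support.tail.getLast hne = y := by
      rw [List.getLast_tail]; simp
    have hnt : W.support.tail.Nodup := hnd.tail
    rw [← List.dropLast_append_getLast hne, hl] at hnt
    grind

theorem Labelled.of_hasK5 (h : HasK5Subdivision G) : ∃ b lab, Labelled G b lab := by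
  classical
  obtain ⟨b, hb, P, hP, hbr, hdis⟩ := h
  let lab : V → Option (Sym2 (Fin 5)) := fun y =>
    if hy : ∃ e : Fin 5 × Fin 5, e.1 < e.2 ∧ y ∈ walkInterior (P e.1 e.2) then
      some s(hy.choose.1, hy.choose.2) else none
  have hlab : ∀ i j, i < j → ∀ y ∈ walkInterior (P i j), lab y = some s(i, j) := by
    intro i j hij y hy
    have hex : ∃ e : Fin 5 × Fin 5, e.1 < e.2 ∧ y ∈ walkInterior (P e.1 e.2) := ⟨(i, j), hij, hy⟩
    have hs := hex.choose_spec
    have : (hex.choose.1, hex.choose.2) = (i, j) := by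
      by_contra hne
      exact hdis _ _ _ _ hs.1 hij hne y hs.2 (interior_mem _ (hP i j hij) hy).1
    simp only [lab, dif_pos hex]
    simp only [Prod.mk.injEq] at this
    rw [this.1, this.2]
  have hlt : ∀ i j, i < j →
      Reach G {y | y = b i ∨ y = b j ∨ lab y = some s(i, j)} (b i) (b j) := by
    intro i j hij
    refine ⟨P i j, fun y hy => ?_⟩
    rcases mem_interior _ hy with h | h | h
    · exact Or.inl h
    · exact Or.inr (Or.inl h)
    · exact Or.inr (Or.inr (hlab i j hij y h))
  refine ⟨b, lab, hb, fun k => ?_, fun i j hij => ?_⟩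
  · have : ¬ ∃ e : Fin 5 × Fin 5, e.1 < e.2 ∧ b k ∈ walkInterior (P e.1 e.2) := by
      rintro ⟨e, he, hk⟩
      exact hbr _ _ he k hk
    simp only [lab, dif_neg this]
  · rcases lt_or_gt_of_ne hij with h | h
    · exact hlt i j h
    · refine (hlt j i h).symm.mono ?_
      rintro y (hy | hy | hy)
      · exact Or.inr (Or.inl hy)
      · exact Or.inl hy
      · exact Or.inr (Or.inr (by rw [hy, Sym2.eq_swap]))

theorem Labelled.exists_strong {b : Fin 5 → V} {lab : V → Option (Sym2 (Fin 5))}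
    (h : Labelled G b lab) : ∃ P, Strong G b lab P := by
  classical
  have hex : ∀ i j, ∃ W : G.Walk (b i) (b j), i ≠ j → W.IsPath ∧
      (∀ y ∈ W.support, y = b i ∨ y = b j ∨ lab y = some s(i, j)) ∧
      (G.Adj (b i) (b j) → s(b i, b j) ∈ W.edges) := by
    intro i j
    by_cases hij : i = j
    · subst hij
      exact ⟨Walk.nil, fun h => absurd rfl h⟩
    by_cases hadj : G.Adj (b i) (b j)
    · refine ⟨hadj.toWalk, fun _ => ⟨?_, ?_, ?_⟩⟩
      · simp [Walk.cons_isPath_iff, hadj.ne]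
      · intro y hy
        simp at hy
        tauto
      · simp
    · obtain ⟨W, hW⟩ := h.reach i j hij
      exact ⟨W.bypass, fun _ => ⟨W.bypass_isPath,
        fun y hy => hW y (W.support_bypass_subset_support hy), fun hadj' => absurd hadj' hadj⟩⟩
  choose Q hQ using hex
  let P : ∀ i j, G.Walk (b i) (b j) := fun i j =>
    if i < j then Q i j else if j < i then (Q j i).reverse else
      if h : i = j then (Walk.nil : G.Walk (b i) (b i)).copy rfl (congrArg b h) else Q i j
  have hlt : ∀ i j, i < j → P i j = Q i j := fun i j hij => by simp only [P, if_pos hij]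
  have hgt : ∀ i j, j < i → P i j = (Q j i).reverse := fun i j hij => by
    simp only [P, if_pos hij, if_neg hij.not_gt]
  refine ⟨P, h.inj, h.lab_b, ?_, ?_, ?_, ?_⟩
  · intro i j hij
    rcases lt_or_gt_of_ne hij with h | h
    · rw [hlt _ _ h]; exact (hQ i j hij).1
    · rw [hgt _ _ h]; exact (hQ j i hij.symm).1.reverse
  · intro i j
    rcases lt_trichotomy i j with h | h | h
    · rw [hlt _ _ h, hgt _ _ h]
    · subst h; simp [P]
    · rw [hlt _ _ h, hgt _ _ h, Walk.reverse_reverse]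
  · intro i j hij y hy
    rcases lt_or_gt_of_ne hij with h | h
    · rw [hlt _ _ h] at hy; exact (hQ i j hij).2.1 y hy
    · rw [hgt _ _ h, Walk.support_reverse, List.mem_reverse] at hy
      have := (hQ j i hij.symm).2.1 y hy
      rw [Sym2.eq_swap]
      tauto
  · intro i j hij hadj
    rcases lt_or_gt_of_ne hij with h | h
    · rw [hlt _ _ h]; exact (hQ i j hij).2.2 hadj
    · rw [hgt _ _ h, Walk.edges_reverse, List.mem_reverse, Sym2.eq_swap]
      exact (hQ j i hij.symm).2.2 hadj.symm

theorem Labelled.hasK5 {b : Fin 5 → V} {lab : V → Option (Sym2 (Fin 5))}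
    (h : Labelled G b lab) : HasK5Subdivision G := by
  obtain ⟨P, hP⟩ := h.exists_strong
  have hinner : ∀ i j, i < j → ∀ y ∈ walkInterior (P i j), lab y = some s(i, j) := by
    intro i j hij y hy
    obtain ⟨h1, h2, h3⟩ := interior_mem _ (hP.path i j hij.ne) hy
    have := hP.supp i j hij.ne y h1
    tauto
  refine ⟨b, hP.inj, P, fun i j hij => hP.path i j hij.ne, ?_, ?_⟩
  · intro i j hij k hk
    have := hinner i j hij _ hk
    rw [hP.lab_b] at this
    cases this
  · intro i j i' j' hij hij' hne y hy hy'
    have h1 := hinner i j hij _ hy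
    rcases hP.supp i' j' hij'.ne y hy' with h2 | h2 | h2
    · rw [h2, hP.lab_b] at h1; cases h1
    · rw [h2, hP.lab_b] at h1; cases h1
    · rw [h1, Option.some.injEq, Sym2.eq_iff] at h2
      rcases h2 with ⟨rfl, rfl⟩ | ⟨rfl, rfl⟩
      · exact hne rfl
      · exact absurd hij hij'.not_gt


/-! ### Rerouting and splitting -/

section Moves

variable {b : Fin 5 → V} {lab : V → Option (Sym2 (Fin 5))} {P : ∀ i j, H.Walk (b i) (b j)}

/-- The edge `f` lies on one of the ten paths of the subdivision. -/
def Used (P : ∀ i j, H.Walk (b i) (b j)) (f : Sym2 V) : Prop :=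
  ∃ i j, i ≠ j ∧ f ∈ (P i j).edges

theorem Strong.edges_swap (hP : Strong H b lab P) {i j : Fin 5} {f : Sym2 V}
    (h : f ∈ (P i j).edges) : f ∈ (P j i).edges := by
  rw [hP.symm i j, Walk.edges_reverse, List.mem_reverse]
  exact h

theorem Strong.mem_of_eq (hP : Strong H b lab P) {i j k l : Fin 5} {f : Sym2 V}
    (h : f ∈ (P i j).edges) (he : s(i, j) = s(k, l)) : f ∈ (P k l).edges := by
  rcases Sym2.eq_iff.1 he with ⟨rfl, rfl⟩ | ⟨rfl, rfl⟩
  · exact h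
  · exact hP.edges_swap h

/-- Two different paths of the subdivision share no edge. -/
theorem Strong.edge_unique (hP : Strong H b lab P) {i j k l : Fin 5} (hij : i ≠ j) (hkl : k ≠ l)
    {f : Sym2 V} (h : f ∈ (P i j).edges) (h' : f ∈ (P k l).edges) : s(i, j) = s(k, l) := by
  induction f with | _ a c
  have hac : a ≠ c := ((P i j).adj_of_mem_edges h).ne
  have a1 := hP.supp i j hij a (Walk.fst_mem_support_of_mem_edges _ h)
  have c1 := hP.supp i j hij c (Walk.snd_mem_support_of_mem_edges _ h)
  have a2 := hP.supp k l hkl a (Walk.fst_mem_support_of_mem_edges _ h')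
  have c2 := hP.supp k l hkl c (Walk.snd_mem_support_of_mem_edges _ h')
  have hl := hP.lab_b
  have hi : ∀ m n, b m = b n → m = n := fun m n h => hP.inj h
  rw [Sym2.eq_iff]
  by_cases hla : lab a = none
  · by_cases hlc : lab c = none
    · grind
    · have : lab c = some s(i, j) := by grind
      have : lab c = some s(k, l) := by grind
      have h3 : s(i, j) = s(k, l) := by grind
      exact Sym2.eq_iff.1 h3
  · have : lab a = some s(i, j) := by grind
    have : lab a = some s(k, l) := by grind
    have h3 : s(i, j) = s(k, l) := by grind
    exact Sym2.eq_iff.1 h3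

theorem Strong.not_isolated (hP : Strong H b lab P) {i j : Fin 5} (hij : i ≠ j) {y : V}
    (hy : y ∈ (P i j).support) : ∃ y', H.Adj y y' := by
  have hnn : ¬ (P i j).Nil := Walk.not_nil_of_ne fun h => hij (hP.inj h)
  obtain ⟨e, he, hye⟩ := (Walk.mem_support_iff_exists_mem_edges_of_not_nil hnn).1 hy
  induction e with | _ a c
  have hadj := (P i j).adj_of_mem_edges he
  rcases Sym2.mem_iff.1 hye with rfl | rfl
  · exact ⟨_, hadj⟩
  · exact ⟨_, hadj.symm⟩

/-- A path meets a non-branch vertex only if the vertex carries its label. -/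
theorem Strong.lab_of_nonbranch (hP : Strong H b lab P) {p a : V} (hp : ∀ k, p ≠ b k)
    {i j : Fin 5} (hij : i ≠ j) (h : s(p, a) ∈ (P i j).edges) : lab p = some s(i, j) := by
  have := hP.supp i j hij p (Walk.fst_mem_support_of_mem_edges _ h)
  have := hp i
  have := hp j
  tauto

/-- A path using an edge at the branch vertex `b i` ends at `b i`. -/
theorem Strong.of_branch (hP : Strong H b lab P) {i : Fin 5} {a : V}
    (h : Used P s(b i, a)) : ∃ j, i ≠ j ∧ s(b i, a) ∈ (P i j).edges := by
  obtain ⟨k, l, hkl, he⟩ := h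
  rcases hP.supp k l hkl _ (Walk.fst_mem_support_of_mem_edges _ he) with h | h | h
  · obtain rfl := hP.inj h
    exact ⟨l, hkl, he⟩
  · obtain rfl := hP.inj h
    exact ⟨k, hkl.symm, hP.edges_swap he⟩
  · rw [hP.lab_b] at h; cases h

/-- Only branch vertices have three edges in the subdivision. -/
theorem Strong.branch_of_three (hP : Strong H b lab P) {p a₁ a₂ a₃ : V}
    (h₁₂ : a₁ ≠ a₂) (h₁₃ : a₁ ≠ a₃) (h₂₃ : a₂ ≠ a₃)
    (h₁ : Used P s(p, a₁)) (h₂ : Used P s(p, a₂)) (h₃ : Used P s(p, a₃)) : ∃ i, p = b i := by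
  by_contra! hp
  obtain ⟨i, j, hij, e₁⟩ := h₁
  obtain ⟨k, l, hkl, e₂⟩ := h₂
  obtain ⟨m, n, hmn, e₃⟩ := h₃
  have l₁ := hP.lab_of_nonbranch hp hij e₁
  have l₂ := hP.lab_of_nonbranch hp hkl e₂
  have l₃ := hP.lab_of_nonbranch hp hmn e₃
  rw [l₁, Option.some.injEq] at l₂ l₃
  have := path_degree_le_two _ (hP.path i j hij) e₁ (hP.mem_of_eq e₂ l₂.symm)
    (hP.mem_of_eq e₃ l₃.symm)
  tauto

/-- **Rerouting.** Each vertex `y` with `own y = some f` is isolated in `H` and is handed to the path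
of the subdivision that contains the edge `f`. If every edge of every path can be replaced in `G`
by a connection through the vertices handed to that path, then `G` has a subdivision of `K5`. -/
theorem Strong.reroute (hP : Strong H b lab P) (own : V → Option (Sym2 V))
    (hown : ∀ y f, own y = some f → ∀ y', ¬ H.Adj y y')
    (h : ∀ i j, i ≠ j → ∀ a c, s(a, c) ∈ (P i j).edges →
      Reach G {y | y = a ∨ y = c ∨ ∃ f ∈ (P i j).edges, own y = some f} a c) :
    HasK5Subdivision G := by
  classical
  let lab' : V → Option (Sym2 (Fin 5)) := fun y =>
    match own y with
    | none => lab y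
    | some f => if hf : ∃ e : Fin 5 × Fin 5, e.1 ≠ e.2 ∧ f ∈ (P e.1 e.2).edges then
        some s(hf.choose.1, hf.choose.2) else none
  have hold : ∀ i j, i ≠ j → ∀ y ∈ (P i j).support, lab' y = lab y := by
    intro i j hij y hy
    obtain ⟨y', hy'⟩ := hP.not_isolated hij hy
    have : own y = none := by
      cases ho : own y with
      | none => rfl
      | some f => exact absurd hy' (hown y f ho y')
    simp only [lab', this]
  have hnew : ∀ i j, i ≠ j → ∀ f ∈ (P i j).edges, ∀ y, own y = some f →
      lab' y = some s(i, j) := by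
    intro i j hij f hf y hy
    have hex : ∃ e : Fin 5 × Fin 5, e.1 ≠ e.2 ∧ f ∈ (P e.1 e.2).edges := ⟨(i, j), hij, hf⟩
    simp only [lab', hy, dif_pos hex]
    exact congrArg some (hP.edge_unique hex.choose_spec.1 hij hex.choose_spec.2 hf)
  refine Labelled.hasK5 (b := b) (lab := lab') ⟨hP.inj, fun k => ?_, fun i j hij => ?_⟩
  · obtain ⟨l, hl⟩ := exists_ne k
    rw [hold k l hl.symm _ (Walk.start_mem_support _), hP.lab_b]
  · refine reach_of_walk (P i j) (Or.inr (Or.inl rfl)) fun a c hac => (h i j hij a c hac).mono ?_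
    have old : ∀ y ∈ (P i j).support, y = b i ∨ y = b j ∨ lab' y = some s(i, j) := by
      intro y hy
      rw [hold i j hij y hy]
      exact hP.supp i j hij y hy
    rintro y (rfl | rfl | ⟨f, hf, hy⟩)
    · exact old _ (Walk.fst_mem_support_of_mem_edges _ hac)
    · exact old _ (Walk.snd_mem_support_of_mem_edges _ hac)
    · exact Or.inr (Or.inr (hnew i j hij f hf y hy))

/-- **Splitting.** If the subdivision uses three edges `pa₁, pa₂, pa₃` at `p`, these may be moved
to a vertex `q` that is isolated in `H` and adjacent to `p` in `H'`: then `p` is a branch vertex,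
`q` takes over its role, and `p` becomes an inner vertex of the fourth path. -/
theorem Strong.split {H' : SimpleGraph V} (hP : Strong H b lab P) {p q a₁ a₂ a₃ : V}
    (h₁₂ : a₁ ≠ a₂) (h₁₃ : a₁ ≠ a₃) (h₂₃ : a₂ ≠ a₃)
    (h₁ : Used P s(p, a₁)) (h₂ : Used P s(p, a₂)) (h₃ : Used P s(p, a₃))
    (hq : ∀ y, ¬ H.Adj q y) (hqp : H'.Adj q p)
    (hq₁ : H'.Adj q a₁) (hq₂ : H'.Adj q a₂) (hq₃ : H'.Adj q a₃)
    (hH : ∀ y y', H.Adj y y' → s(y, y') ≠ s(p, a₁) → s(y, y') ≠ s(p, a₂) →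
      s(y, y') ≠ s(p, a₃) → H'.Adj y y') : HasK5Subdivision H' := by
  classical
  obtain ⟨i, rfl⟩ := hP.branch_of_three h₁₂ h₁₃ h₂₃ h₁ h₂ h₃
  obtain ⟨j₁, hj₁, e₁⟩ := hP.of_branch h₁
  obtain ⟨j₂, hj₂, e₂⟩ := hP.of_branch h₂
  obtain ⟨j₃, hj₃, e₃⟩ := hP.of_branch h₃
  have d₁₂ : j₁ ≠ j₂ := by
    rintro rfl
    exact h₁₂ (first_edge_unique _ (hP.path i _ hj₁) e₁ e₂)
  have d₁₃ : j₁ ≠ j₃ := by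
    rintro rfl
    exact h₁₃ (first_edge_unique _ (hP.path i _ hj₁) e₁ e₃)
  have d₂₃ : j₂ ≠ j₃ := by
    rintro rfl
    exact h₂₃ (first_edge_unique _ (hP.path i _ hj₂) e₂ e₃)
  obtain ⟨j₄, hj₄, hall⟩ : ∃ j₄, (i ≠ j₄ ∧ j₁ ≠ j₄ ∧ j₂ ≠ j₄ ∧ j₃ ≠ j₄) ∧
      ∀ j, i ≠ j → j = j₁ ∨ j = j₂ ∨ j = j₃ ∨ j = j₄ := by
    clear e₁ e₂ e₃ h₁ h₂ h₃ hH hqp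
    revert i j₁ j₂ j₃
    decide
  have hqs : ∀ k l, k ≠ l → q ∉ (P k l).support := by
    intro k l hkl hmem
    obtain ⟨y, hy⟩ := hP.not_isolated hkl hmem
    exact hq y hy
  have hqb : ∀ k, q ≠ b k := by
    rintro k rfl
    obtain ⟨l, hl⟩ := exists_ne k
    exact hqs k l hl.symm (Walk.start_mem_support _)
  let b' : Fin 5 → V := Function.update b i q
  let lab' : V → Option (Sym2 (Fin 5)) := fun y =>
    if y = b i then some s(i, j₄) else if y = q then none else lab y
  have b'i : b' i = q := by simp [b']
  have b'k : ∀ k, k ≠ i → b' k = b k := fun k hk => by simp [b', hk]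
  have lab'q : lab' q = none := by simp [lab', hqb i]
  have lab'p : lab' (b i) = some s(i, j₄) := by simp [lab']
  have lab'y : ∀ y, y ≠ b i → y ≠ q → lab' y = lab y := fun y h hne => by simp [lab', h, hne]
  -- Edges avoiding `p` survive in `H'`.
  have surv : ∀ k l, ∀ y y', s(y, y') ∈ (P k l).edges → y ≠ b i → y' ≠ b i → H'.Adj y y' := by
    intro k l y y' he hy hy'
    refine hH y y' ((P k l).adj_of_mem_edges he) ?_ ?_ ?_ <;>
    · intro h
      rcases Sym2.eq_iff.1 h with h | h
      · exact hy h.1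
      · exact hy' h.2
  -- The three paths whose first edge has been moved to `q`.
  have moved : ∀ j a, i ≠ j → s(b i, a) ∈ (P i j).edges → H'.Adj q a →
      Reach H' {y | y = q ∨ y = b j ∨ lab' y = some s(i, j)} q (b j) := by
    intro j a hij he hqa
    obtain ⟨W, hpW, hWs, hWe⟩ := exists_tail _ (hP.path i j hij) he
    have hin : ∀ y ∈ W.support, y = q ∨ y = b j ∨ lab' y = some s(i, j) := by
      intro y hy
      have hyp : y ≠ b i := fun h => hpW (h ▸ hy)
      have hyq : y ≠ q := fun h => hqs i j hij (h ▸ hWs hy)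
      have := hP.supp i j hij y (hWs hy)
      rw [lab'y y hyp hyq]
      tauto
    refine (Reach.edge hqa (Or.inl rfl) (hin a W.start_mem_support)).trans
      (reach_of_walk W (Or.inr (Or.inl rfl)) fun y y' hyy => ?_)
    have hy := Walk.fst_mem_support_of_mem_edges _ hyy
    have hy' := Walk.snd_mem_support_of_mem_edges _ hyy
    exact Reach.edge (surv i j y y' (hWe hyy) (fun h => hpW (h ▸ hy)) fun h => hpW (h ▸ hy'))
      (hin y hy) (hin y' hy')
  have fourth : Reach H' {y | y = q ∨ y = b j₄ ∨ lab' y = some s(i, j₄)} q (b j₄) := by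
    have hin : ∀ y ∈ (P i j₄).support, y = q ∨ y = b j₄ ∨ lab' y = some s(i, j₄) := by
      intro y hy
      by_cases hyp : y = b i
      · rw [hyp]; exact Or.inr (Or.inr lab'p)
      have := hP.supp i j₄ hj₄.1 y hy
      rw [lab'y y hyp fun h => hqs i j₄ hj₄.1 (h ▸ hy)]
      tauto
    have hne : ∀ j a, i ≠ j → j ≠ j₄ → s(b i, a) ∈ (P i j).edges → ∀ f ∈ (P i j₄).edges,
        f ≠ s(b i, a) := by
      rintro j a hij hj he f hf rfl
      rcases Sym2.eq_iff.1 (hP.edge_unique hij hj₄.1 he hf) with h | h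
      · exact hj h.2
      · exact hij h.2.symm
    refine (Reach.edge hqp (Or.inl rfl) (Or.inr (Or.inr lab'p))).trans
      (reach_of_walk (P i j₄) (Or.inr (Or.inl rfl)) fun y y' hyy => ?_)
    exact Reach.edge (hH y y' ((P i j₄).adj_of_mem_edges hyy)
      (hne _ _ hj₁ hj₄.2.1 e₁ _ hyy) (hne _ _ hj₂ hj₄.2.2.1 e₂ _ hyy)
      (hne _ _ hj₃ hj₄.2.2.2 e₃ _ hyy))
      (hin y (Walk.fst_mem_support_of_mem_edges _ hyy))
      (hin y' (Walk.snd_mem_support_of_mem_edges _ hyy))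
  have fromq : ∀ j, i ≠ j →
      Reach H' {y | y = q ∨ y = b j ∨ lab' y = some s(i, j)} q (b j) := by
    intro j hij
    rcases hall j hij with rfl | rfl | rfl | rfl
    · exact moved _ _ hij e₁ hq₁
    · exact moved _ _ hij e₂ hq₂
    · exact moved _ _ hij e₃ hq₃
    · exact fourth
  refine Labelled.hasK5 (b := b') (lab := lab') ⟨?_, fun k => ?_, fun k l hkl => ?_⟩
  · intro k l hkl
    by_cases hk : k = i <;> by_cases hl : l = i
    · rw [hk, hl]
    · rw [hk, b'i, b'k l hl] at hkl; exact absurd hkl (hqb l)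
    · rw [hl, b'i, b'k k hk] at hkl; exact absurd hkl.symm (hqb k)
    · rw [b'k k hk, b'k l hl] at hkl; exact hP.inj hkl
  · by_cases hk : k = i
    · rw [hk, b'i, lab'q]
    · rw [b'k k hk, lab'y _ (fun h => hk (hP.inj h)) (hqb k).symm, hP.lab_b]
  · by_cases hk : k = i
    · subst hk
      rw [b'i, b'k l hkl.symm]
      exact fromq l hkl
    by_cases hl : l = i
    · subst hl
      rw [b'i, b'k k hk]
      refine (fromq k hkl.symm).symm.mono ?_
      rintro y (hy | hy | hy)
      · exact Or.inr (Or.inl hy)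
      · exact Or.inl hy
      · exact Or.inr (Or.inr (by rw [hy, Sym2.eq_swap]))
    rw [b'k k hk, b'k l hl]
    have hnp : ∀ y ∈ (P k l).support, y ≠ b i := by
      rintro y hy rfl
      rcases hP.supp k l hkl _ hy with h | h | h
      · exact hk (hP.inj h).symm
      · exact hl (hP.inj h).symm
      · rw [hP.lab_b] at h; cases h
    have hin : ∀ y ∈ (P k l).support, y = b k ∨ y = b l ∨ lab' y = some s(k, l) := by
      intro y hy
      rw [lab'y y (hnp y hy) fun h => hqs k l hkl (h ▸ hy)]
      exact hP.supp k l hkl y hy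
    refine reach_of_walk (P k l) (Or.inr (Or.inl rfl)) fun y y' hyy => ?_
    have hy := Walk.fst_mem_support_of_mem_edges _ hyy
    have hy' := Walk.snd_mem_support_of_mem_edges _ hyy
    exact Reach.edge (surv k l y y' hyy (hnp y hy) (hnp y' hy')) (hin y hy) (hin y' hy')

end Moves

end Basic


/-! ### The configuration -/

section Patch

variable {V : Type} {G H : SimpleGraph V}

/-- `G − X + T` with the added edges given as unordered pairs. -/
def patch (G : SimpleGraph V) (X : Set V) (T : Set (Sym2 V)) : SimpleGraph V where
  Adj y y' := y ≠ y' ∧ ((G.Adj y y' ∧ y ∉ X ∧ y' ∉ X) ∨ s(y, y') ∈ T)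
  symm := ⟨fun y y' h => ⟨h.1.symm, by
    rcases h.2 with h | h
    · exact Or.inl ⟨h.1.symm, h.2.2, h.2.1⟩
    · exact Or.inr (Sym2.eq_swap ▸ h)⟩⟩
  loopless := ⟨fun y h => h.1 rfl⟩

theorem patch_adj {X : Set V} {T : Set (Sym2 V)} {y y' : V} : (patch G X T).Adj y y' ↔
    y ≠ y' ∧ ((G.Adj y y' ∧ y ∉ X ∧ y' ∉ X) ∨ s(y, y') ∈ T) := Iff.rfl

/-- The configuration inside `G`, restricted to the edges through which added edges are rerouted;
these have the symmetry `Gadget.swap`. -/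
structure Gadget (G : SimpleGraph V) (p q r s t u v w z x : V) : Prop where
  dist : List.Pairwise (· ≠ ·) [p, q, r, s, t, u, v, w, z, x]
  zp : G.Adj z p
  zq : G.Adj z q
  zt : G.Adj z t
  zu : G.Adj z u
  zv : G.Adj z v
  zw : G.Adj z w
  uq : G.Adj u q
  ur : G.Adj u r
  vw : G.Adj v w
  vr : G.Adj v r
  wt : G.Adj w t
  ws : G.Adj w s
  qp : G.Adj q p
  qx : G.Adj q x

variable {p q r s t u v w z x : V}

theorem Gadget.swap (hg : Gadget G p q r s t u v w z x) : Gadget G t w r x p v u q z s where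
  dist := by
    have := hg.dist
    simp only [List.pairwise_cons, List.mem_cons, List.not_mem_nil] at this ⊢
    grind
  zp := hg.zt
  zq := hg.zw
  zt := hg.zp
  zu := hg.zv
  zv := hg.zu
  zw := hg.zq
  uq := hg.vw
  ur := hg.vr
  vw := hg.uq
  vr := hg.ur
  wt := hg.qp
  ws := hg.qx
  qp := hg.wt
  qx := hg.ws

open Classical in
/-- The map handing the five gadget vertices to edges, and no other vertex to anything. -/
noncomputable def owner (q u v w z : V) (oq ou ov ow oz : Option (Sym2 V)) :
    V → Option (Sym2 V) := fun y =>
  if y = q then oq else if y = u then ou else if y = v then ov else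
    if y = w then ow else if y = z then oz else none

theorem Gadget.owner_eq (hg : Gadget G p q r s t u v w z x) (oq ou ov ow oz : Option (Sym2 V)) :
    owner q u v w z oq ou ov ow oz q = oq ∧ owner q u v w z oq ou ov ow oz u = ou ∧
    owner q u v w z oq ou ov ow oz v = ov ∧ owner q u v w z oq ou ov ow oz w = ow ∧
    owner q u v w z oq ou ov ow oz z = oz := by
  have := hg.dist
  simp only [List.pairwise_cons, List.mem_cons, List.not_mem_nil] at this
  unfold owner
  grind

theorem reach_via_one {A : Set V} {a y c : V} (h₁ : G.Adj a y) (h₂ : G.Adj y c)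
    (ha : a ∈ A) (hy : y ∈ A) (hc : c ∈ A) : Reach G A a c :=
  (Reach.edge h₁ ha hy).trans (Reach.edge h₂ hy hc)

theorem reach_via_two {A : Set V} {a y y' c : V} (h₁ : G.Adj a y) (h₂ : G.Adj y y')
    (h₃ : G.Adj y' c) (ha : a ∈ A) (hy : y ∈ A) (hy' : y' ∈ A) (hc : c ∈ A) : Reach G A a c :=
  (reach_via_one h₁ h₂ ha hy hy').trans (Reach.edge h₃ hy' hc)

variable {b : Fin 5 → V} {lab : V → Option (Sym2 (Fin 5))} {P : ∀ i j, H.Walk (b i) (b j)}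

theorem edges_comm {a c y y' : V} {W : H.Walk y y'} (h : s(a, c) ∈ W.edges) :
    s(c, a) ∈ W.edges := by
  rwa [Sym2.eq_swap]

theorem used_comm {a c : V} (h : Used P s(a, c)) : Used P s(c, a) := by
  rwa [Sym2.eq_swap]

/-- Rerouting through the gadget, for a graph of the form `G − {q, u, v, w, z} + T`. The set `O`
lists every pair of `T` in at least one orientation. -/
theorem reroute_patch {T : Set (Sym2 V)} (O : Set (V × V))
    (hO : ∀ a c, s(a, c) ∈ T → (a, c) ∈ O ∨ (c, a) ∈ O)
    (hH : H = patch G {q, u, v, w, z} T) (hP : Strong H b lab P)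
    (oq ou ov ow oz : Option (Sym2 V))
    (fq : oq = none ∨ ∀ f ∈ T, q ∉ f) (fu : ou = none ∨ ∀ f ∈ T, u ∉ f)
    (fv : ov = none ∨ ∀ f ∈ T, v ∉ f) (fw : ow = none ∨ ∀ f ∈ T, w ∉ f)
    (fz : oz = none ∨ ∀ f ∈ T, z ∉ f)
    (h : ∀ i j, i ≠ j → ∀ a c, (a, c) ∈ O → s(a, c) ∈ (P i j).edges →
      Reach G {y | y = a ∨ y = c ∨
        ∃ f ∈ (P i j).edges, owner q u v w z oq ou ov ow oz y = some f} a c) :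
    HasK5Subdivision G := by
  subst hH
  refine hP.reroute (owner q u v w z oq ou ov ow oz) ?_ ?_
  · intro y f hy y' hadj
    have hy' : y ∈ ({q, u, v, w, z} : Set V) ∧ ∀ f ∈ T, y ∉ f := by
      unfold owner at hy
      simp only [Set.mem_insert_iff, Set.mem_singleton_iff]
      grind
    rcases (patch_adj.1 hadj).2 with h1 | h1
    · exact h1.2.1 hy'.1
    · exact hy'.2 _ h1 (Sym2.mem_mk_left _ _)
  · intro i j hij a c hac
    rcases (patch_adj.1 ((P i j).adj_of_mem_edges hac)).2 with h1 | h1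
    · exact Reach.edge h1.1 (Or.inl rfl) (Or.inr (Or.inl rfl))
    rcases hO a c h1 with h1 | h1
    · exact h i j hij a c h1 hac
    · refine (h i j hij c a h1 (edges_comm hac)).symm.mono ?_
      rintro y (hy | hy | hy)
      · exact Or.inr (Or.inl hy)
      · exact Or.inl hy
      · exact Or.inr (Or.inr hy)

/-- Rerouting when the branch vertices stay in place. The hypotheses say which gadget vertices are
available to the path that uses a given added edge; `rp` is replaced by `p-q-u-r` or `p-z-u-r`,
`rt` by `t-w-v-r` or `t-z-v-r`, `pt` by `p-z-t`, `px` by `p-q-x` and `ts` by `t-w-s`. -/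
theorem Gadget.reroute_zero (hg : Gadget G p q r s t u v w z x)
    (hH : H = patch G {q, u, v, w, z} {s(r, p), s(r, t), s(p, t), s(p, x), s(t, s)})
    (hP : Strong H b lab P) (oq ou ov ow oz : Option (Sym2 V))
    (hrp : ∀ i j, i ≠ j → s(r, p) ∈ (P i j).edges →
      ((∃ f ∈ (P i j).edges, oq = some f) ∨ ∃ f ∈ (P i j).edges, oz = some f) ∧
        ∃ f ∈ (P i j).edges, ou = some f)
    (hrt : ∀ i j, i ≠ j → s(r, t) ∈ (P i j).edges →
      ((∃ f ∈ (P i j).edges, ow = some f) ∨ ∃ f ∈ (P i j).edges, oz = some f) ∧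
        ∃ f ∈ (P i j).edges, ov = some f)
    (hpt : ∀ i j, i ≠ j → s(p, t) ∈ (P i j).edges → ∃ f ∈ (P i j).edges, oz = some f)
    (hpx : ∀ i j, i ≠ j → s(p, x) ∈ (P i j).edges → ∃ f ∈ (P i j).edges, oq = some f)
    (hts : ∀ i j, i ≠ j → s(t, s) ∈ (P i j).edges → ∃ f ∈ (P i j).edges, ow = some f) :
    HasK5Subdivision G := by
  have hd := hg.dist
  simp only [List.pairwise_cons, List.mem_cons, List.not_mem_nil] at hd
  have fresh : ∀ y, y ≠ p → y ≠ r → y ≠ s → y ≠ t → y ≠ x →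
      ∀ f ∈ ({s(r, p), s(r, t), s(p, t), s(p, x), s(t, s)} : Set (Sym2 V)), y ∉ f := by
    intro y h1 h2 h3 h4 h5 f hf
    simp only [Set.mem_insert_iff, Set.mem_singleton_iff] at hf
    rcases hf with rfl | rfl | rfl | rfl | rfl <;> simp [*]
  obtain ⟨eq, eu, ev, ew, ez⟩ := hg.owner_eq oq ou ov ow oz
  refine reroute_patch {(r, p), (r, t), (p, t), (p, x), (t, s)} ?_ hH hP oq ou ov ow oz
    (Or.inr (fresh _ ?_ ?_ ?_ ?_ ?_)) (Or.inr (fresh _ ?_ ?_ ?_ ?_ ?_))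
    (Or.inr (fresh _ ?_ ?_ ?_ ?_ ?_)) (Or.inr (fresh _ ?_ ?_ ?_ ?_ ?_))
    (Or.inr (fresh _ ?_ ?_ ?_ ?_ ?_)) ?_
  on_goal 27 =>
    intro i j hij a c hac he
    simp only [Set.mem_insert_iff, Set.mem_singleton_iff, Prod.mk.injEq] at hac
    rcases hac with ⟨rfl, rfl⟩ | ⟨rfl, rfl⟩ | ⟨rfl, rfl⟩ | ⟨rfl, rfl⟩ | ⟨rfl, rfl⟩
    · obtain ⟨h1 | h1, h2⟩ := hrp i j hij he
      · exact reach_via_two hg.ur.symm hg.uq hg.qp (by simp) (by simp [eu, h2])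
          (by simp [eq, h1]) (by simp)
      · exact reach_via_two hg.ur.symm hg.zu.symm hg.zp (by simp) (by simp [eu, h2])
          (by simp [ez, h1]) (by simp)
    · obtain ⟨h1 | h1, h2⟩ := hrt i j hij he
      · exact reach_via_two hg.vr.symm hg.vw hg.wt (by simp) (by simp [ev, h2])
          (by simp [ew, h1]) (by simp)
      · exact reach_via_two hg.vr.symm hg.zv.symm hg.zt (by simp) (by simp [ev, h2])
          (by simp [ez, h1]) (by simp)
    · exact reach_via_one hg.zp.symm hg.zt (by simp) (by simp [ez, hpt i j hij he]) (by simp)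
    · exact reach_via_one hg.qp.symm hg.qx (by simp) (by simp [eq, hpx i j hij he]) (by simp)
    · exact reach_via_one hg.wt.symm hg.ws (by simp) (by simp [ew, hts i j hij he]) (by simp)
  on_goal 1 =>
    intro a c hac
    simp only [Set.mem_insert_iff, Set.mem_singleton_iff, Sym2.eq_iff, Prod.mk.injEq] at hac ⊢
    grind
  all_goals grind

/-- Rerouting after `p` has been split, so that `q` carries the edges `qx`, `qr`, `qt`. Here `qr` is
replaced by `q-u-r`, `qt` by `q-z-t`, `rt` by `t-w-v-r` or `t-z-v-r`, and `ts` by `t-w-s`. -/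
theorem Gadget.reroute_one (hg : Gadget G p q r s t u v w z x)
    (hH : H = patch G {q, u, v, w, z} {s(q, p), s(q, x), s(q, r), s(q, t), s(r, t), s(t, s)})
    (hP : Strong H b lab P) (ov ow oz : Option (Sym2 V))
    (hrt : ∀ i j, i ≠ j → s(r, t) ∈ (P i j).edges →
      ((∃ f ∈ (P i j).edges, ow = some f) ∨ ∃ f ∈ (P i j).edges, oz = some f) ∧
        ∃ f ∈ (P i j).edges, ov = some f)
    (hqt : ∀ i j, i ≠ j → s(q, t) ∈ (P i j).edges → ∃ f ∈ (P i j).edges, oz = some f)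
    (hts : ∀ i j, i ≠ j → s(t, s) ∈ (P i j).edges → ∃ f ∈ (P i j).edges, ow = some f) :
    HasK5Subdivision G := by
  have hd := hg.dist
  simp only [List.pairwise_cons, List.mem_cons, List.not_mem_nil] at hd
  have fresh : ∀ y, y ≠ p → y ≠ r → y ≠ s → y ≠ t → y ≠ x → y ≠ q → ∀ f ∈
      ({s(q, p), s(q, x), s(q, r), s(q, t), s(r, t), s(t, s)} : Set (Sym2 V)), y ∉ f := by
    intro y h1 h2 h3 h4 h5 h6 f hf
    simp only [Set.mem_insert_iff, Set.mem_singleton_iff] at hf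
    rcases hf with rfl | rfl | rfl | rfl | rfl | rfl <;> simp [*]
  obtain ⟨-, eu, ev, ew, ez⟩ := hg.owner_eq none (some s(q, r)) ov ow oz
  refine reroute_patch {(q, p), (q, x), (q, r), (q, t), (r, t), (t, s)} ?_ hH hP
    none (some s(q, r)) ov ow oz (Or.inl rfl)
    (Or.inr (fresh _ ?_ ?_ ?_ ?_ ?_ ?_)) (Or.inr (fresh _ ?_ ?_ ?_ ?_ ?_ ?_))
    (Or.inr (fresh _ ?_ ?_ ?_ ?_ ?_ ?_)) (Or.inr (fresh _ ?_ ?_ ?_ ?_ ?_ ?_)) ?_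
  on_goal 26 =>
    intro i j hij a c hac he
    simp only [Set.mem_insert_iff, Set.mem_singleton_iff, Prod.mk.injEq] at hac
    rcases hac with ⟨rfl, rfl⟩ | ⟨rfl, rfl⟩ | ⟨rfl, rfl⟩ | ⟨rfl, rfl⟩ | ⟨rfl, rfl⟩ | ⟨rfl, rfl⟩
    · exact Reach.edge hg.qp (by simp) (by simp)
    · exact Reach.edge hg.qx (by simp) (by simp)
    · exact reach_via_one hg.uq.symm hg.ur (by simp) (by simp [eu, he]) (by simp)
    · exact reach_via_one hg.zq.symm hg.zt (by simp) (by simp [ez, hqt i j hij he]) (by simp)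
    · obtain ⟨h1 | h1, h2⟩ := hrt i j hij he
      · exact reach_via_two hg.vr.symm hg.vw hg.wt (by simp) (by simp [ev, h2])
          (by simp [ew, h1]) (by simp)
      · exact reach_via_two hg.vr.symm hg.zv.symm hg.zt (by simp) (by simp [ev, h2])
          (by simp [ez, h1]) (by simp)
    · exact reach_via_one hg.wt.symm hg.ws (by simp) (by simp [ew, hts i j hij he]) (by simp)
  on_goal 1 =>
    intro a c hac
    simp only [Set.mem_insert_iff, Set.mem_singleton_iff, Sym2.eq_iff, Prod.mk.injEq] at hac ⊢
    grind
  all_goals grind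

/-- Rerouting after both `p` and `t` have been split: `qr`, `qw`, `wr` are subdivided by `u`, `z`,
`v` respectively. -/
theorem Gadget.reroute_two (hg : Gadget G p q r s t u v w z x)
    (hH : H = patch G {q, u, v, w, z}
      {s(q, p), s(q, x), s(q, r), s(w, q), s(w, t), s(w, r), s(w, s)})
    (hP : Strong H b lab P) : HasK5Subdivision G := by
  have hd := hg.dist
  simp only [List.pairwise_cons, List.mem_cons, List.not_mem_nil] at hd
  have fresh : ∀ y, y ≠ p → y ≠ r → y ≠ s → y ≠ t → y ≠ x → y ≠ q → y ≠ w → ∀ f ∈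
      ({s(q, p), s(q, x), s(q, r), s(w, q), s(w, t), s(w, r), s(w, s)} : Set (Sym2 V)),
      y ∉ f := by
    intro y h1 h2 h3 h4 h5 h6 h7 f hf
    simp only [Set.mem_insert_iff, Set.mem_singleton_iff] at hf
    rcases hf with rfl | rfl | rfl | rfl | rfl | rfl | rfl <;> simp [*]
  obtain ⟨-, eu, ev, -, ez⟩ :=
    hg.owner_eq none (some s(q, r)) (some s(w, r)) none (some s(w, q))
  refine reroute_patch {(q, p), (q, x), (q, r), (w, q), (w, t), (w, r), (w, s)} ?_ hH hP
    none (some s(q, r)) (some s(w, r)) none (some s(w, q)) (Or.inl rfl)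
    (Or.inr (fresh _ ?_ ?_ ?_ ?_ ?_ ?_ ?_)) (Or.inr (fresh _ ?_ ?_ ?_ ?_ ?_ ?_ ?_)) (Or.inl rfl)
    (Or.inr (fresh _ ?_ ?_ ?_ ?_ ?_ ?_ ?_)) ?_
  on_goal 23 =>
    intro i j hij a c hac he
    simp only [Set.mem_insert_iff, Set.mem_singleton_iff, Prod.mk.injEq] at hac
    rcases hac with ⟨rfl, rfl⟩ | ⟨rfl, rfl⟩ | ⟨rfl, rfl⟩ | ⟨rfl, rfl⟩ | ⟨rfl, rfl⟩ | ⟨rfl, rfl⟩ |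
      ⟨rfl, rfl⟩
    · exact Reach.edge hg.qp (by simp) (by simp)
    · exact Reach.edge hg.qx (by simp) (by simp)
    · exact reach_via_one hg.uq.symm hg.ur (by simp) (by simp [eu, he]) (by simp)
    · exact reach_via_one hg.zw.symm hg.zq (by simp) (by simp [ez, he]) (by simp)
    · exact Reach.edge hg.wt (by simp) (by simp)
    · exact reach_via_one hg.vw.symm hg.vr (by simp) (by simp [ev, he]) (by simp)
    · exact Reach.edge hg.ws (by simp) (by simp)
  on_goal 1 =>
    intro a c hac
    simp only [Set.mem_insert_iff, Set.mem_singleton_iff, Sym2.eq_iff, Prod.mk.injEq] at hac ⊢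
    clear * - hac
    rcases hac with (h | h) | (h | h) | (h | h) | (h | h) | (h | h) | (h | h) | (h | h) <;>
      simp [h]
  all_goals grind

/-! ### Case analysis -/

/-- The case where the subdivision uses all three added edges at `p`: split `p`, then split `t` if
its three added edges are still all in use. -/
theorem Gadget.of_split (hg : Gadget G p q r s t u v w z x)
    (hH : H = patch G {q, u, v, w, z} {s(r, p), s(r, t), s(p, t), s(p, x), s(t, s)})
    (hP : Strong H b lab P)
    (h₁ : Used P s(p, x)) (h₂ : Used P s(p, r)) (h₃ : Used P s(p, t)) :
    HasK5Subdivision G := by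
  have hd := hg.dist
  simp only [List.pairwise_cons, List.mem_cons, List.not_mem_nil] at hd
  have hsplit : HasK5Subdivision
      (patch G {q, u, v, w, z} {s(q, p), s(q, x), s(q, r), s(q, t), s(r, t), s(t, s)}) := by
    refine hP.split (q := q) ?_ ?_ ?_ h₁ h₂ h₃ ?_ ?_ ?_ ?_ ?_ ?_
    on_goal 9 =>
      intro y y' hadj n₁ n₂ n₃
      rw [hH, patch_adj] at hadj
      rw [patch_adj]
      rw [Sym2.eq_swap (a := p) (b := r)] at n₂
      simp only [Set.mem_insert_iff, Set.mem_singleton_iff] at hadj ⊢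
      tauto
    on_goal 4 =>
      intro y hadj
      rw [hH, patch_adj] at hadj
      simp only [Set.mem_insert_iff, Set.mem_singleton_iff, Sym2.eq_iff] at hadj
      grind
    on_goal 4 => rw [patch_adj]; simp; grind
    on_goal 4 => rw [patch_adj]; simp; grind
    on_goal 4 => rw [patch_adj]; simp; grind
    on_goal 4 => rw [patch_adj]; simp; grind
    all_goals grind
  obtain ⟨b', lab', hl⟩ := Labelled.of_hasK5 hsplit
  obtain ⟨P', hP'⟩ := hl.exists_strong
  by_cases hs : Used P' s(t, s)
  · by_cases hr : Used P' s(t, r)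
    · by_cases hq : Used P' s(t, q)
      · have hsplit' : HasK5Subdivision (patch G {q, u, v, w, z}
            {s(q, p), s(q, x), s(q, r), s(w, q), s(w, t), s(w, r), s(w, s)}) := by
          refine hP'.split (q := w) ?_ ?_ ?_ hs hr hq ?_ ?_ ?_ ?_ ?_ ?_
          on_goal 9 =>
            intro y y' hadj n₁ n₂ n₃
            rw [patch_adj] at hadj
            rw [patch_adj]
            rw [Sym2.eq_swap (a := t) (b := r)] at n₂
            rw [Sym2.eq_swap (a := t) (b := q)] at n₃
            simp only [Set.mem_insert_iff, Set.mem_singleton_iff] at hadj ⊢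
            tauto
          on_goal 4 =>
            intro y hadj
            rw [patch_adj] at hadj
            simp only [Set.mem_insert_iff, Set.mem_singleton_iff, Sym2.eq_iff] at hadj
            grind
          on_goal 4 => rw [patch_adj]; simp; grind
          on_goal 4 => rw [patch_adj]; simp; grind
          on_goal 4 => rw [patch_adj]; simp; grind
          on_goal 4 => rw [patch_adj]; simp; grind
          all_goals grind
        obtain ⟨b'', lab'', hl'⟩ := Labelled.of_hasK5 hsplit'
        obtain ⟨P'', hP''⟩ := hl'.exists_strong
        exact hg.reroute_two rfl hP''
      · refine hg.reroute_one rfl hP' (some s(r, t)) (some s(t, s)) (some s(r, t)) ?_ ?_ ?_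
        · intro i j hij h; simp [h]
        · intro i j hij h; exact absurd ⟨i, j, hij, edges_comm h⟩ hq
        · intro i j hij h; simp [h]
    · refine hg.reroute_one rfl hP' none (some s(t, s)) (some s(q, t)) ?_ ?_ ?_
      · intro i j hij h; exact absurd ⟨i, j, hij, edges_comm h⟩ hr
      · intro i j hij h; simp [h]
      · intro i j hij h; simp [h]
  · refine hg.reroute_one rfl hP' (some s(r, t)) (some s(r, t)) (some s(q, t)) ?_ ?_ ?_
    · intro i j hij h; simp [h]
    · intro i j hij h; simp [h]
    · intro i j hij h; exact absurd ⟨i, j, hij, h⟩ hs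

/-- The case where one of the three added edges at `p`, and one of those at `t`, is not used: the
branch vertices stay in place. -/
theorem Gadget.of_unused (hg : Gadget G p q r s t u v w z x)
    (hH : H = patch G {q, u, v, w, z} {s(r, p), s(r, t), s(p, t), s(p, x), s(t, s)})
    (hP : Strong H b lab P)
    (up : Used P s(p, x) → Used P s(p, t) → ¬ Used P s(r, p))
    (ut : Used P s(t, s) → Used P s(p, t) → ¬ Used P s(r, t)) :
    HasK5Subdivision G := by
  have hpt : p ≠ t := by
    have hd := hg.dist
    simp only [List.pairwise_cons, List.mem_cons, List.not_mem_nil] at hd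
    grind
  have use : ∀ {f i j}, i ≠ j → f ∈ (P i j).edges → Used P f := fun hij h => ⟨_, _, hij, h⟩
  by_cases hz : Used P s(p, t)
  · -- Here `z` serves `pt`, and one of `px`, `rp` and one of `ts`, `rt` is unused.
    by_cases h₁ : Used P s(p, x) <;> by_cases h₂ : Used P s(t, s)
    · have n₁ := up h₁ hz
      have n₂ := ut h₂ hz
      refine hg.reroute_zero hH hP (some s(p, x)) none none (some s(t, s)) (some s(p, t))
        ?_ ?_ ?_ ?_ ?_ <;> intro i j hij h <;>
        first | (simp [h]; done) | exact absurd (use hij h) (by assumption)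
    · have n₁ := up h₁ hz
      refine hg.reroute_zero hH hP (some s(p, x)) none (some s(r, t)) (some s(r, t))
        (some s(p, t)) ?_ ?_ ?_ ?_ ?_ <;> intro i j hij h <;>
        first | (simp [h]; done) | exact absurd (use hij h) (by assumption)
    · have n₂ := ut h₂ hz
      refine hg.reroute_zero hH hP (some s(r, p)) (some s(r, p)) none (some s(t, s))
        (some s(p, t)) ?_ ?_ ?_ ?_ ?_ <;> intro i j hij h <;>
        first | (simp [h]; done) | exact absurd (use hij h) (by assumption)
    · refine hg.reroute_zero hH hP (some s(r, p)) (some s(r, p)) (some s(r, t)) (some s(r, t))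
        (some s(p, t)) ?_ ?_ ?_ ?_ ?_ <;> intro i j hij h <;>
        first | (simp [h]; done) | exact absurd (use hij h) (by assumption)
  -- From here on `pt` is unused, and `z` serves `rp` or `rt`.
  by_cases h₁ : Used P s(p, x)
  swap
  · refine hg.reroute_zero hH hP (some s(r, p)) (some s(r, p)) (some s(r, t)) (some s(t, s))
      (some s(r, t)) ?_ ?_ ?_ ?_ ?_ <;> intro i j hij h <;>
      first | (simp [h]; done) | exact absurd (use hij h) (by assumption)
  by_cases h₂ : Used P s(t, s)
  swap
  · refine hg.reroute_zero hH hP (some s(p, x)) (some s(r, p)) (some s(r, t)) (some s(r, t))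
      (some s(r, p)) ?_ ?_ ?_ ?_ ?_ <;> intro i j hij h <;>
      first | (simp [h]; done) | exact absurd (use hij h) (by assumption)
  -- Adjacent branch vertices are joined by an edge of the subdivision, so `p` and `t` are not both
  -- branch vertices. At a vertex that is not one, all edges in use lie on the same path.
  have same : ∀ {c a a' : V}, (∀ k, c ≠ b k) → Used P s(c, a) → ∀ i j, i ≠ j →
      s(c, a') ∈ (P i j).edges → s(c, a) ∈ (P i j).edges := by
    rintro c a a' hc ⟨k, l, hkl, hk⟩ i j hij h
    have l₁ := hP.lab_of_nonbranch hc hkl hk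
    rw [hP.lab_of_nonbranch hc hij h, Option.some.injEq] at l₁
    exact hP.mem_of_eq hk l₁.symm
  by_cases hp : ∀ k, p ≠ b k
  · -- `x-p-r` lies on a single path, which may use `q` for both `px` and `rp`.
    refine hg.reroute_zero hH hP (some s(p, x)) (some s(r, p)) (some s(r, t)) (some s(t, s))
      (some s(r, t)) ?_ ?_ ?_ ?_ ?_ <;> intro i j hij h
    · have := same hp h₁ i j hij (edges_comm h)
      simp [h, this]
    all_goals first | (simp [h]; done) | exact absurd (use hij h) (by assumption)
  by_cases ht : ∀ k, t ≠ b k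
  · refine hg.reroute_zero hH hP (some s(p, x)) (some s(r, p)) (some s(r, t)) (some s(t, s))
      (some s(r, p)) ?_ ?_ ?_ ?_ ?_ <;> intro i j hij h
    on_goal 2 =>
      have := same ht h₂ i j hij (edges_comm h)
      simp [h, this]
    all_goals first | (simp [h]; done) | exact absurd (use hij h) (by assumption)
  push Not at hp ht
  obtain ⟨k, rfl⟩ := hp
  obtain ⟨l, rfl⟩ := ht
  have hkl : k ≠ l := fun h => hpt (congrArg b h)
  refine absurd ⟨k, l, hkl, hP.short k l hkl ?_⟩ hz
  rw [hH, patch_adj]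
  exact ⟨hpt, Or.inr (by simp)⟩

/-- The statement for `patch`: at `p` and at `t`, either all three added edges are used and the
vertex is split, or the rerouting needs no new branch vertex. -/
theorem Gadget.main (hg : Gadget G p q r s t u v w z x)
    (hH : H = patch G {q, u, v, w, z} {s(r, p), s(r, t), s(p, t), s(p, x), s(t, s)})
    (h : HasK5Subdivision H) : HasK5Subdivision G := by
  obtain ⟨b, lab, hl⟩ := Labelled.of_hasK5 h
  obtain ⟨P, hP⟩ := hl.exists_strong
  by_cases up : Used P s(p, x) ∧ Used P s(p, t) ∧ Used P s(r, p)
  · exact hg.of_split hH hP up.1 (used_comm up.2.2) up.2.1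
  by_cases ut : Used P s(t, s) ∧ Used P s(p, t) ∧ Used P s(r, t)
  · refine hg.swap.of_split ?_ hP ut.1 (used_comm ut.2.2) (used_comm ut.2.1)
    rw [hH]
    congr 1
    · ext y; simp only [Set.mem_insert_iff, Set.mem_singleton_iff]; clear * -; tauto
    · ext y
      rw [Sym2.eq_swap (a := t) (b := p)]
      simp only [Set.mem_insert_iff, Set.mem_singleton_iff]
      clear * -
      tauto
  exact hg.of_unused hH hP (fun h₁ h₂ h₃ => up ⟨h₁, h₂, h₃⟩) fun h₁ h₂ h₃ => ut ⟨h₁, h₂, h₃⟩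

theorem deleteAdd_eq_patch :
    deleteAdd G {q, u, v, w, z} {(r, p), (r, t), (p, t), (p, x), (t, s)} =
      patch G {q, u, v, w, z} {s(r, p), s(r, t), s(p, t), s(p, x), s(t, s)} := by
  ext a c
  have key : s(a, c) ∈ ({s(r, p), s(r, t), s(p, t), s(p, x), s(t, s)} : Set (Sym2 V)) ↔
      (a, c) ∈ ({(r, p), (r, t), (p, t), (p, x), (t, s)} : Set (V × V)) ∨
        (c, a) ∈ ({(r, p), (r, t), (p, t), (p, x), (t, s)} : Set (V × V)) := by
    simp only [Set.mem_insert_iff, Set.mem_singleton_iff, Sym2.eq_iff, Prod.mk.injEq]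
    constructor
    · rintro ((h | h) | (h | h) | (h | h) | (h | h) | (h | h)) <;> simp [h]
    · rintro ((h | h | h | h | h) | (h | h | h | h | h)) <;> simp [h]
  rw [patch_adj, key, deleteAdd, SimpleGraph.fromRel_adj, G.adj_comm c a]
  clear key
  generalize ((a, c) ∈ ({(r, p), (r, t), (p, t), (p, x), (t, s)} : Set (V × V))) = A
  generalize ((c, a) ∈ ({(r, p), (r, t), (p, t), (p, x), (t, s)} : Set (V × V))) = C
  generalize ({q, u, v, w, z} : Set V) = X
  tauto

end Patch

end K5Gadget

/-- If `zp, zq, zt, zu, zv, zw, uq, uv, ur, vw, vr, vs, wt, ws, qp, qx`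
are edges of `G` and `G − {q, u, v, w, z} + {rp, rt, pt, px, ts}` contains a subdivision
of `K5`, then so does `G`. -/
theorem statement18 {V : Type} (G : SimpleGraph V) (p q r s t u v w z x : V)
    (hdist : List.Pairwise (· ≠ ·) [p, q, r, s, t, u, v, w, z, x])
    (hzp : G.Adj z p) (hzq : G.Adj z q) (hzt : G.Adj z t) (hzu : G.Adj z u)
    (hzv : G.Adj z v) (hzw : G.Adj z w) (huq : G.Adj u q) (huv : G.Adj u v)
    (hur : G.Adj u r) (hvw : G.Adj v w) (hvr : G.Adj v r) (hvs : G.Adj v s)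
    (hwt : G.Adj w t) (hws : G.Adj w s) (hqp : G.Adj q p) (hqx : G.Adj q x)
    (hsub : HasK5Subdivision
      (deleteAdd G {q, u, v, w, z} {(r, p), (r, t), (p, t), (p, x), (t, s)})) :
    HasK5Subdivision G := by
  rw [K5Gadget.deleteAdd_eq_patch] at hsub
  exact K5Gadget.Gadget.main
    ⟨hdist, hzp, hzq, hzt, hzu, hzv, hzw, huq, hur, hvw, hvr, hwt, hws, hqp, hqx⟩ rfl hsub
end

section
/- Let G be a graph containing distinct vertices u, v, w, v1, v2, v3, v4, v5 such that N_G(u) = {v1, v5, v, w}, N_G(v) = {v2, v3, u, w}, and N_G(w) = {v3, v4, v5, u, v}. If the graph G − {u, v, w} + {v5v2, v5v3} is 4-colorable, then G is 4-colorable. -/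
/-!
Start from a 4-coloring `c` of `G − {u, v, w} + {v5v2, v5v3}`.  The added edges give
`c v5 ≠ c v2` and `c v5 ≠ c v3`.  Keep `c` outside `{u, v, w}`, give `w` a color missing from
`c v3, c v4, c v5`, give `v` the color `c v5`, and give `u` a color missing from
`c v1, c v5` and the color of `w`.  Since `v` reuses the color of `v5`, which both `u` and `w`
already avoid, the triangle `uvw` imposes no further constraint.
-/

open SimpleGraph

/-- Three colors never exhaust a palette of four. -/
lemma exists_fourth_color (a b c : Fin 4) : ∃ d : Fin 4, d ≠ a ∧ d ≠ b ∧ d ≠ c := by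
  decide +revert

/-- If `N_G(u) = {v1, v5, v, w}`, `N_G(v) = {v2, v3, u, w}`,
`N_G(w) = {v3, v4, v5, u, v}`, and `G − {u, v, w} + {v5v2, v5v3}` is 4-colorable, then
`G` is 4-colorable. -/
theorem statement19 {V : Type} (G : SimpleGraph V) (u v w v1 v2 v3 v4 v5 : V)
    (hdist : List.Pairwise (· ≠ ·) [u, v, w, v1, v2, v3, v4, v5])
    (hu : G.neighborSet u = {v1, v5, v, w})
    (hv : G.neighborSet v = {v2, v3, u, w})
    (hw : G.neighborSet w = {v3, v4, v5, u, v})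
    (hcol : (deleteAdd G {u, v, w} {(v5, v2), (v5, v3)}).Colorable 4) :
    G.Colorable 4 := by
  classical
  obtain ⟨c⟩ := hcol
  have hold : ∀ a b, G.Adj a b → a ≠ u → a ≠ v → a ≠ w → b ≠ u → b ≠ v → b ≠ w →
      c a ≠ c b := by
    intro a b hab ha1 ha2 ha3 hb1 hb2 hb3
    refine c.valid ?_
    simp [deleteAdd, hab, hab.ne, *]
  simp only [List.pairwise_cons, List.mem_cons, List.not_mem_nil, or_false, forall_eq_or_imp,
    forall_eq] at hdist
  have h52 : c v5 ≠ c v2 := c.valid (by simp [deleteAdd]; grind)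
  have h53 : c v5 ≠ c v3 := c.valid (by simp [deleteAdd]; grind)
  obtain ⟨cw, hw3, hw4, hw5⟩ := exists_fourth_color (c v3) (c v4) (c v5)
  obtain ⟨cu, hu1, hu5, huw⟩ := exists_fourth_color (c v1) (c v5) cw
  have hau : ∀ x, G.Adj u x ↔ x = v1 ∨ x = v5 ∨ x = v ∨ x = w := fun x => by
    simpa using Set.ext_iff.1 hu x
  have hav : ∀ x, G.Adj v x ↔ x = v2 ∨ x = v3 ∨ x = u ∨ x = w := fun x => by
    simpa using Set.ext_iff.1 hv x
  have haw : ∀ x, G.Adj w x ↔ x = v3 ∨ x = v4 ∨ x = v5 ∨ x = u ∨ x = v := fun x => by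
    simpa using Set.ext_iff.1 hw x
  refine ⟨Coloring.mk
    (fun x => if x = u then cu else if x = v then c v5 else if x = w then cw else c x) ?_⟩
  intro a b hab
  have hba := hab.symm
  have hne := hab.ne
  by_cases a = u <;> by_cases a = v <;> by_cases a = w <;> by_cases b = u <;>
    by_cases b = v <;> by_cases b = w <;> grind
end
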